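/- For each d ∈ {3, 4, 5} there exists a constant c > 0 (depending only on ξ, the sequence (x_k), and d) such that for every pair of polynomials P, R ∈ ℤ[T] with deg(R) = d and deg(P) ≤ 2, one has |P(ξ) + R(ξ)| ≥ c·(1 + ‖P‖)^(−γ)·‖R‖^(−e(d)), where e(3) = γ⁴ and e(d) = γ^(d+7) for d = 4, 5. -/

import Mathlib

open Polynomial Filter

noncomputable def gold : ℝ := (1 + Real.sqrt 5) / 2

def Mmat (k : ℕ) : Matrix (Fin 2) (Fin 2) ℤ := !![3, (-1)^k; (-1)^(k+1), 0]

noncomputable def Xnorm (x : ℕ → Matrix (Fin 2) (Fin 2) ℤ) (k : ℕ) : ℝ :=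
  max |(x k 0 0 : ℝ)| (max |(x k 0 1 : ℝ)| |(x k 1 1 : ℝ)|)

def MarkoffSeq (ξ : ℝ) (x : ℕ → Matrix (Fin 2) (Fin 2) ℤ) : Prop :=
  (∀ k, 1 ≤ k → x k 0 1 = x k 1 0) ∧
  (∀ k, 1 ≤ k → (x k).det = 1) ∧
  ∃ c₁ c₂ c₃ : ℝ, 0 < c₁ ∧ 0 < c₂ ∧ 0 < c₃ ∧ ∀ k, 1 ≤ k →
    (c₁ * Xnorm x k ^ gold ≤ Xnorm x (k+1) ∧ Xnorm x (k+1) ≤ c₂ * Xnorm x k ^ gold) ∧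
    (|(x k 0 0 : ℝ) * ξ - (x k 0 1 : ℝ)| ≤ c₃ / Xnorm x k ∧
     |(x k 0 1 : ℝ) * ξ - (x k 1 1 : ℝ)| ≤ c₃ / Xnorm x k) ∧
    (x (k+2) = x (k+1) * Mmat (k+1) * x k ∧ x (k+2) = x k * Mmat k * x (k+1)) ∧
    (Xnorm x k < Xnorm x (k+1) ∧ Xnorm x k < (1 + ξ^2) * |(x k 0 0 : ℝ)|)

def polyNorm (P : Polynomial ℤ) : ℕ := P.support.sup fun i => (P.coeff i).natAbs

noncomputable def distInt (η : ℝ) : ℝ := |η - round η|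

noncomputable def ratHeight (α : ℚ) : ℝ := max |(α.num : ℝ)| (α.den : ℝ)

def IsMinIntPoly (α : ℂ) (P : Polynomial ℤ) : Prop :=
  P ≠ 0 ∧ Polynomial.aeval α P = 0 ∧ P.content = 1 ∧ 0 < P.leadingCoeff ∧
  ∀ Q : Polynomial ℤ, Q ≠ 0 → Polynomial.aeval α Q = 0 → P.degree ≤ Q.degree

noncomputable def Qpoly (x : ℕ → Matrix (Fin 2) (Fin 2) ℤ) (k : ℕ) : Polynomial ℤ :=
  Polynomial.C (x k 0 1 * x (k+1) 1 1 - x k 1 1 * x (k+1) 0 1)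
  - Polynomial.C (x k 0 0 * x (k+1) 1 1 - x k 1 1 * x (k+1) 0 0) * Polynomial.X
  + Polynomial.C (x k 0 0 * x (k+1) 0 1 - x k 0 1 * x (k+1) 0 0) * Polynomial.X ^ 2

/-- The sequences `a = x₀`, `b = x₁`, `c = x₂` attached to a Markoff sequence of symmetric
matrices, with the entrywise form of `x (k+2) = x (k+1) * M (k+1) * x k`. -/
structure MarkoffTriple {R : Type*} [CommRing R] (a b c : ℕ → R) : Prop where
  det : ∀ k, a k * c k - b k ^ 2 = 1
  mul00 : ∀ k, a (k + 2) =
    (3 * a (k + 1) + (-1) ^ k * b (k + 1)) * a k - (-1) ^ k * a (k + 1) * b k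
  mul01 : ∀ k, b (k + 2) =
    (3 * a (k + 1) + (-1) ^ k * b (k + 1)) * b k - (-1) ^ k * a (k + 1) * c k
  mul10 : ∀ k, b (k + 2) =
    (3 * b (k + 1) + (-1) ^ k * c (k + 1)) * a k - (-1) ^ k * b (k + 1) * b k
  mul11 : ∀ k, c (k + 2) =
    (3 * b (k + 1) + (-1) ^ k * c (k + 1)) * b k - (-1) ^ k * b (k + 1) * c k

lemma neg_one_pow_mul_self {R : Type*} [CommRing R] (k : ℕ) : ((-1 : R) ^ k) ^ 2 = 1 := by
  rw [← pow_mul, mul_comm, pow_mul]; simp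

namespace MarkoffTriple

variable {R : Type*} [CommRing R] {a b c : ℕ → R}

lemma minor_succ (h : MarkoffTriple a b c) (k : ℕ) :
    a (k + 1) * b (k + 2) - b (k + 1) * a (k + 2) = (-1) ^ k * a k := by
  linear_combination a (k + 1) * h.mul10 k - b (k + 1) * h.mul00 k + (-1) ^ k * a k * h.det (k + 1)

lemma minor_add_two (h : MarkoffTriple a b c) (k : ℕ) :
    a k * b (k + 2) - b k * a (k + 2) = -(-1) ^ k * a (k + 1) := by
  linear_combination a k * h.mul01 k - b k * h.mul00 k - (-1) ^ k * a (k + 1) * h.det k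

lemma rec_a (h : MarkoffTriple a b c) (k : ℕ) :
    a (k + 3) = 3 * a (k + 1) * a (k + 2) - a k := by
  have h3 := h.mul00 (k + 1)
  have e2 := neg_one_pow_mul_self (R := R) k
  rw [pow_succ] at h3
  linear_combination h3 - (-1) ^ k * h.minor_succ k - a k * e2

lemma rec_b (h : MarkoffTriple a b c) (k : ℕ) :
    b (k + 3) = 3 * a (k + 1) * b (k + 2) - b k := by
  have h3 := h.mul10 (k + 1)
  have e2 := neg_one_pow_mul_self (R := R) k
  have h1 : a (k + 1) * c (k + 2) - b (k + 1) * b (k + 2) = (-1) ^ k * b k := by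
    linear_combination a (k + 1) * h.mul11 k - b (k + 1) * h.mul01 k +
      (-1) ^ k * b k * h.det (k + 1)
  rw [pow_succ] at h3
  linear_combination h3 - (-1) ^ k * h1 - b k * e2

lemma rec_c (h : MarkoffTriple a b c) (k : ℕ) :
    c (k + 3) = 3 * a (k + 1) * c (k + 2) - c k := by
  have h3 := h.mul11 (k + 1)
  have e2 := neg_one_pow_mul_self (R := R) k
  have h1 : a (k + 1) * c (k + 2) - b (k + 1) * b (k + 2) = (-1) ^ k * b k := by
    linear_combination a (k + 1) * h.mul11 k - b (k + 1) * h.mul01 k +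
      (-1) ^ k * b k * h.det (k + 1)
  have h2 : c (k + 1) * b (k + 2) - b (k + 1) * c (k + 2) = 3 * b k - (-1) ^ k * c k := by
    linear_combination c (k + 1) * h.mul01 k - b (k + 1) * h.mul11 k +
      (3 * b k - (-1) ^ k * c k) * h.det (k + 1)
  rw [pow_succ] at h3
  linear_combination h3 - 3 * h1 + (-1) ^ k * h2 - c k * e2

lemma minor_add_four (h : MarkoffTriple a b c) (k : ℕ) :
    a (k + 1) * b (k + 5) - b (k + 1) * a (k + 5) =
      (-1) ^ k * (3 * a (k + 2) * a (k + 4) + a (k + 3)) := by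
  have r3 := h.rec_a k
  have r4 := h.rec_a (k + 1)
  have r4b := h.rec_b (k + 1)
  have r5 := h.rec_a (k + 2)
  have r5b := h.rec_b (k + 2)
  have m1 := h.minor_succ k
  have m2 := h.minor_add_two (k + 1)
  rw [pow_succ] at m2
  linear_combination a (k + 1) * r5b - b (k + 1) * r5 + 3 * a (k + 3) * (a (k + 1) * r4b -
    b (k + 1) * r4) - m1 + 9 * a (k + 3) * a (k + 2) * m2 -
    (-1) ^ k * (3 * a (k + 2) * r4 + r3)

lemma map {S : Type*} [CommRing S] (h : MarkoffTriple a b c) (f : R →+* S) :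
    MarkoffTriple (fun k => f (a k)) (fun k => f (b k)) (fun k => f (c k)) where
  det k := by simpa using congrArg f (h.det k)
  mul00 k := by simpa [map_ofNat] using congrArg f (h.mul00 k)
  mul01 k := by simpa [map_ofNat] using congrArg f (h.mul01 k)
  mul10 k := by simpa [map_ofNat] using congrArg f (h.mul10 k)
  mul11 k := by simpa [map_ofNat] using congrArg f (h.mul11 k)

end MarkoffTriple

namespace MarkoffTriple

variable {R : Type*} [CommRing R] {a b c : ℕ → R}

/-- The integer close to `a (k + 1) * a (k + 3) * ξ ^ 3`. -/
def near3' (b c : ℕ → R) (k : ℕ) : R := b (k + 1) * c (k + 3) + (-1) ^ k * c (k + 2)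

/-- The integer close to `a (k + 1) * a (k + 5) * ξ ^ 3`. -/
def near3 (a b c : ℕ → R) (k : ℕ) : R :=
  b (k + 1) * c (k + 5) + (-1) ^ k * (3 * a (k + 2) * c (k + 4) + c (k + 3))

/-- The integer close to `a (k + 1) ^ 2 * a (k + 5) * ξ ^ 4`. -/
def near4 (a b c : ℕ → R) (k : ℕ) : R :=
  b (k + 1) ^ 2 * c (k + 5) + 2 * (-1) ^ k * b (k + 1) * (3 * a (k + 2) * c (k + 4) + c (k + 3)) +
    9 * a (k + 2) ^ 2 * c (k + 2) - 6 * (-1) ^ k * b (k + 2) - 9 * a (k + 2) + c (k + 2)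

/-- The integer close to `a (k + 1) ^ 3 * a (k + 5) * ξ ^ 5`. -/
def near5 (a b c : ℕ → R) (k : ℕ) : R :=
  b (k + 1) ^ 3 * c (k + 5) +
    3 * (-1) ^ k * b (k + 1) ^ 2 * (3 * a (k + 2) * c (k + 4) + c (k + 3)) +
    6 * b (k + 1) * c (k + 2) + 3 * b (k + 2) * c (k + 4) + 9 * a k * b (k + 2) * c (k + 2) +
    3 * b k - (-1) ^ k * (c (k + 3) + 3 * c k + 18 * a k * b (k + 2) ^ 2)

lemma near_of_eq_zero (h : MarkoffTriple a b c) {k : ℕ} (h0 : a (k + 1) = 0) :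
    b (k + 1) * a k * near3' b c k = 2 ∧ a k * near3 a b c k = -2 * (-1) ^ k ∧
      a (k + 2) * near4 a b c k = 4 ∧ a k * near5 a b c k = 8 * (-1) ^ k := by
  have e2 := neg_one_pow_mul_self (R := R) k
  have dv := h.det k
  have dw := h.det (k + 1)
  have y0 := h.mul00 k
  have y1 := h.mul01 k
  have y1' := h.mul10 k
  have y2 := h.mul11 k
  have z0 := h.rec_a k
  have z2 := h.rec_c k
  have s2 := h.rec_c (k + 1)
  have u2 := h.rec_c (k + 2)
  simp only [near3', near3, near4, near5]
  generalize (-1 : R) ^ k = e at *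
  simp only [add_assoc, Nat.reduceAdd] at *
  rw [h0] at *
  generalize a k = v0 at *
  generalize b k = v1 at *
  generalize c k = v2 at *
  generalize b (k + 1) = w1 at *
  generalize c (k + 1) = w2 at *
  have hw : w1 ^ 2 = -1 := by linear_combination -dw
  have hb : v0 * w2 = 2 * w1 * v1 - 3 * e * w1 * v0 := by
    linear_combination e * (y1 - y1') + (2 * w1 * v1 - v0 * w2) * e2
  rw [u2, s2, z2, z0, y2, y1, y0]
  clear u2 s2 z2 z0 y2 y1 y0 y1' dw h0 h
  refine ⟨?_, ?_, ?_, ?_⟩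
  all_goals grind

end MarkoffTriple

lemma gold_sq : gold ^ 2 = gold + 1 := by
  have h : Real.sqrt 5 ^ 2 = 5 := Real.sq_sqrt (by norm_num)
  unfold gold; linear_combination h / 4

lemma gold_pow_three : gold ^ 3 = 2 * gold + 1 := by
  linear_combination (gold + 1) * gold_sq

lemma gold_pow_four : gold ^ 4 = 3 * gold + 2 := by
  linear_combination (gold ^ 2 + gold + 2) * gold_sq

lemma gold_pow_five : gold ^ 5 = 5 * gold + 3 := by
  linear_combination gold * gold_pow_four + 3 * gold_sq

lemma gold_pow_six : gold ^ 6 = 8 * gold + 5 := by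
  linear_combination gold * gold_pow_five + 5 * gold_sq

lemma lt_gold : 1.61 < gold := by
  have : (2.22 : ℝ) < Real.sqrt 5 := Real.lt_sqrt_of_sq_lt (by norm_num)
  unfold gold; linarith

lemma gold_pos : 0 < gold := by linarith [lt_gold]

/-- A sequence of Markoff triples of integers whose ratios approximate `ξ`, together with the
growth conditions on their sizes `X`. -/
structure MarkoffApprox (ξ : ℝ) (a b c : ℕ → ℤ) (X : ℕ → ℝ) : Prop where
  triple : MarkoffTriple a b c
  one_le : ∀ k, 1 ≤ X k
  two_mul_le : ∀ k, 2 * X k ≤ X (k + 1)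
  growth : ∃ C, 0 < C ∧ ∀ k, X (k + 1) ≤ C * X k ^ gold ∧ X k ^ gold ≤ C * X (k + 1)
  abs_a_le : ∀ k, |(a k : ℝ)| ≤ X k
  abs_b_le : ∀ k, |(b k : ℝ)| ≤ X k
  abs_c_le : ∀ k, |(c k : ℝ)| ≤ X k
  le_abs_a : ∀ k, X k ≤ (1 + ξ ^ 2) * |(a k : ℝ)|
  approx : ∃ C, 0 < C ∧ ∀ k, |(a k : ℝ) * ξ - b k| ≤ C / X k ∧ |(b k : ℝ) * ξ - c k| ≤ C / X k

/-- `f k` is bounded by a constant times `X k ^ s`. -/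
def HasOrder (X f : ℕ → ℝ) (s : ℝ) : Prop := ∃ C, 0 < C ∧ ∀ k, |f k| ≤ C * X k ^ s

lemma HasOrder.add {X f g : ℕ → ℝ} {s : ℝ} (hf : HasOrder X f s) (hg : HasOrder X g s) :
    HasOrder X (fun k => f k + g k) s := by
  obtain ⟨C, hC, hf⟩ := hf
  obtain ⟨D, hD, hg⟩ := hg
  refine ⟨C + D, by positivity, fun k => ?_⟩
  rw [add_mul]
  exact (abs_add_le _ _).trans (add_le_add (hf k) (hg k))

/-- `E k` is within `O(X k ^ s)` of an integer. -/
def NearInt (X E : ℕ → ℝ) (s : ℝ) : Prop := ∃ n : ℕ → ℤ, HasOrder X (fun k => E k - n k) s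

namespace MarkoffApprox

variable {ξ : ℝ} {a b c : ℕ → ℤ} {X f g : ℕ → ℝ} {s t : ℝ}

lemma pos (h : MarkoffApprox ξ a b c X) (k : ℕ) : 0 < X k := by linarith [h.one_le k]

lemma order_of_le (h : MarkoffApprox ξ a b c X) {C : ℝ} (hf : ∀ k, |f k| ≤ C * X k ^ s) :
    HasOrder X f s := by
  refine ⟨max C 1, by positivity, fun k => (hf k).trans ?_⟩
  have := h.pos k
  gcongr
  exact le_max_left _ _

lemma order_mono (h : MarkoffApprox ξ a b c X) (hf : HasOrder X f s) (hst : s ≤ t) :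
    HasOrder X f t := by
  obtain ⟨C, hC, hf⟩ := hf
  refine ⟨C, hC, fun k => (hf k).trans ?_⟩
  gcongr
  exact h.one_le k

lemma order_mul (h : MarkoffApprox ξ a b c X) (hf : HasOrder X f s) (hg : HasOrder X g t) :
    HasOrder X (fun k => f k * g k) (s + t) := by
  obtain ⟨C, hC, hf⟩ := hf
  obtain ⟨D, hD, hg⟩ := hg
  refine ⟨C * D, by positivity, fun k => ?_⟩
  have := h.pos k
  rw [abs_mul, Real.rpow_add this]
  calc |f k| * |g k| ≤ (C * X k ^ s) * (D * X k ^ t) := by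
        gcongr
        · exact hf k
        · exact hg k
    _ = _ := by ring

lemma order_const (h : MarkoffApprox ξ a b c X) (r : ℝ) : HasOrder X (fun _ => r) 0 :=
  h.order_of_le (C := |r|) fun k => by simp

lemma order_const_mul (h : MarkoffApprox ξ a b c X) (r : ℝ) (hf : HasOrder X f s) :
    HasOrder X (fun k => r * f k) s := by
  simpa using h.order_mul (h.order_const r) hf

lemma order_succ (h : MarkoffApprox ξ a b c X) (hf : HasOrder X f s) :
    HasOrder X (fun k => f (k + 1)) (gold * s) := by
  obtain ⟨C, hC, hf⟩ := hf
  obtain ⟨D, hD, hg⟩ := h.growth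
  refine h.order_of_le (C := C * (D ^ s + D ^ (-s))) fun k => (hf _).trans ?_
  have h1 := h.pos k
  have h2 := h.pos (k + 1)
  have h3 : 0 < X k ^ gold := by positivity
  rw [mul_assoc, Real.rpow_mul h1.le]
  gcongr
  rcases le_total 0 s with hs | hs
  · calc X (k + 1) ^ s ≤ (D * X k ^ gold) ^ s := by
          gcongr
          exact (hg k).1
      _ = D ^ s * (X k ^ gold) ^ s := Real.mul_rpow hD.le h3.le
      _ ≤ _ := by
        gcongr
        linarith [Real.rpow_pos_of_pos hD (-s)]
  · calc X (k + 1) ^ s = D ^ (-s) * (D * X (k + 1)) ^ s := by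
          rw [Real.mul_rpow hD.le h2.le, ← mul_assoc, ← Real.rpow_add hD]; simp
      _ ≤ D ^ (-s) * (X k ^ gold) ^ s := by
        gcongr D ^ (-s) * ?_
        exact Real.rpow_le_rpow_of_nonpos h3 (hg k).2 hs
      _ ≤ _ := by
        gcongr
        linarith [Real.rpow_pos_of_pos hD s]

lemma order_shift (h : MarkoffApprox ξ a b c X) (hf : HasOrder X f s) (n : ℕ) :
    HasOrder X (fun k => f (k + n)) (gold ^ n * s) := by
  induction n with
  | zero => simpa using hf
  | succ n ih =>
    have := h.order_succ ih
    rw [pow_succ', mul_assoc]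
    convert this using 3
    ring

lemma a_ne_zero (h : MarkoffApprox ξ a b c X) (k : ℕ) : (a k : ℝ) ≠ 0 := by
  intro h0
  have := h.le_abs_a k
  rw [h0] at this
  have := h.one_le k
  simp at *
  linarith

lemma order_X (h : MarkoffApprox ξ a b c X) (s : ℝ) : HasOrder X (fun k => X k ^ s) s :=
  h.order_of_le (C := 1) fun k => by
    have := h.pos k
    rw [abs_of_pos (by positivity)]; simp

lemma order_a (h : MarkoffApprox ξ a b c X) (n : ℕ) :
    HasOrder X (fun k => (a (k + n) : ℝ)) (gold ^ n) := by
  simpa using h.order_shift (s := 1) (h.order_of_le (C := 1) (by simpa using h.abs_a_le)) n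

lemma order_b (h : MarkoffApprox ξ a b c X) (n : ℕ) :
    HasOrder X (fun k => (b (k + n) : ℝ)) (gold ^ n) := by
  simpa using h.order_shift (s := 1) (h.order_of_le (C := 1) (by simpa using h.abs_b_le)) n

lemma order_c (h : MarkoffApprox ξ a b c X) (n : ℕ) :
    HasOrder X (fun k => (c (k + n) : ℝ)) (gold ^ n) := by
  simpa using h.order_shift (s := 1) (h.order_of_le (C := 1) (by simpa using h.abs_c_le)) n

lemma order_inv_a (h : MarkoffApprox ξ a b c X) (n : ℕ) :
    HasOrder X (fun k => (a (k + n) : ℝ)⁻¹) (-gold ^ n) := by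
  have : HasOrder X (fun k => (a k : ℝ)⁻¹) (-1) := by
    refine h.order_of_le (C := 1 + ξ ^ 2) fun k => ?_
    have h1 := h.pos k
    have h2 := abs_pos.2 (h.a_ne_zero k)
    rw [abs_inv, Real.rpow_neg_one, ← div_eq_mul_inv, inv_le_iff_one_le_mul₀ h2, div_mul_eq_mul_div,
      one_le_div h1]
    exact h.le_abs_a k
  simpa using h.order_shift this n

end MarkoffApprox

/-- The approximation defect `a k * ξ - b k`. -/
def del (ξ : ℝ) (a b : ℕ → ℤ) (k : ℕ) : ℝ := a k * ξ - b k

/-- The approximation defect `a k * ξ ^ 2 - c k`. -/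
def rho (ξ : ℝ) (a c : ℕ → ℤ) (k : ℕ) : ℝ := a k * ξ ^ 2 - c k

/-- The difference between `a k * (a k * ξ - b k)` and its limiting value `-(-1) ^ k / 3`. -/
noncomputable def etaDef (ξ : ℝ) (a b : ℕ → ℤ) (k : ℕ) : ℝ := a k * (a k * ξ - b k) + (-1) ^ k / 3

namespace MarkoffApprox

variable {ξ : ℝ} {a b c : ℕ → ℤ} {X f g : ℕ → ℝ} {s t : ℝ}

lemma order_del (h : MarkoffApprox ξ a b c X) (n : ℕ) :
    HasOrder X (fun k => del ξ a b (k + n)) (-gold ^ n) := by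
  obtain ⟨C, -, hC⟩ := h.approx
  simpa using h.order_shift (s := -1) (f := del ξ a b) (h.order_of_le (C := C) fun k => by
    rw [Real.rpow_neg_one, ← div_eq_mul_inv]; exact (hC k).1) n

lemma order_rho (h : MarkoffApprox ξ a b c X) (n : ℕ) :
    HasOrder X (fun k => rho ξ a c (k + n)) (-gold ^ n) := by
  obtain ⟨C, -, hC⟩ := h.approx
  have h1 : HasOrder X (fun k => (b k : ℝ) * ξ - c k) (-1) := h.order_of_le (C := C) fun k => by
    rw [Real.rpow_neg_one, ← div_eq_mul_inv]; exact (hC k).2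
  have h2 : HasOrder X (del ξ a b) (-1) := by simpa using h.order_del 0
  have h3 : HasOrder X (rho ξ a c) (-1) := by
    convert (h.order_const_mul ξ h2).add h1 using 2 with k
    simp only [rho, del]; ring
  simpa using h.order_shift h3 n

lemma order_sign (h : MarkoffApprox ξ a b c X) : HasOrder X (fun k => (-1) ^ k) 0 :=
  h.order_of_le (C := 1) fun k => by simp

lemma real (h : MarkoffApprox ξ a b c X) :
    MarkoffTriple (fun k => (a k : ℝ)) (fun k => (b k : ℝ)) (fun k => (c k : ℝ)) :=
  h.triple.map (Int.castRingHom ℝ)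

lemma order_eta (h : MarkoffApprox ξ a b c X) (n : ℕ) (hn : 1 ≤ n) :
    HasOrder X (fun k => etaDef ξ a b (k + n)) (-2 * gold ^ n) := by
  obtain ⟨n, rfl⟩ := Nat.exists_eq_add_of_le' hn
  have g2 := gold_sq
  have g3 := gold_pow_three
  have l1 := lt_gold
  have h1 : HasOrder X (fun k => etaDef ξ a b (k + 1)) (-2 * gold) := by
    have t1 : HasOrder X (fun k => (a (k + 1) : ℝ) * a (k + 1) * del ξ a b (k + 3) *
        (a (k + 3) : ℝ)⁻¹) (-2 * gold) :=
      h.order_mono (h.order_mul (h.order_mul (h.order_mul (h.order_a 1) (h.order_a 1))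
        (h.order_del 3)) (h.order_inv_a 3)) (by linarith)
    have t2 : HasOrder X (fun k => 1 / 3 * ((-1) ^ k * a (k + 0) * (a (k + 3) : ℝ)⁻¹))
        (-2 * gold) :=
      h.order_const_mul _ (h.order_mono (h.order_mul (h.order_mul h.order_sign (h.order_a 0))
        (h.order_inv_a 3)) (by linarith))
    convert t1.add t2 using 2 with k
    have r := h.real.rec_a k
    have m := h.real.minor_add_two (k + 1)
    have hz := h.a_ne_zero (k + 3)
    simp only [etaDef, del, add_zero]
    simp only [add_assoc, Nat.reduceAdd] at m
    rw [pow_succ] at m ⊢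
    field_simp
    linear_combination 3 * a (k + 1) * m - (-1) ^ k * r
  have h2 := h.order_shift h1 n
  convert h2 using 1
  · ext k; congr 1
  · ring

lemma order_sign_mul (h : MarkoffApprox ξ a b c X) (hf : HasOrder X f s) :
    HasOrder X (fun k => (-1) ^ k * f k) s := by
  simpa using h.order_mul h.order_sign hf

end MarkoffApprox

namespace NearInt

variable {X E F : ℕ → ℝ} {s t : ℝ}

lemma add (hE : NearInt X E s) (hF : NearInt X F s) : NearInt X (fun k => E k + F k) s := by
  obtain ⟨m, hm⟩ := hE
  obtain ⟨n, hn⟩ := hF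
  refine ⟨fun k => m k + n k, ?_⟩
  convert hm.add hn using 2 with k
  push_cast; ring

lemma congr (hE : NearInt X E s) (h : ∀ k, F k = E k) : NearInt X F s := by
  rwa [show F = E from funext h]

end NearInt

namespace MarkoffApprox

variable {ξ : ℝ} {a b c : ℕ → ℤ} {X E F f g : ℕ → ℝ} {s t : ℝ}

lemma near_intCast_mul (h : MarkoffApprox ξ a b c X) (hE : NearInt X E s) (r : ℤ) :
    NearInt X (fun k => r * E k) s := by
  obtain ⟨m, hm⟩ := hE
  refine ⟨fun k => r * m k, ?_⟩
  convert h.order_const_mul r hm using 2 with k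
  push_cast; ring

lemma near_sign_mul (h : MarkoffApprox ξ a b c X) (hE : NearInt X E s) :
    NearInt X (fun k => (-1) ^ k * E k) s := by
  obtain ⟨m, hm⟩ := hE
  refine ⟨fun k => (-1) ^ k * m k, ?_⟩
  convert h.order_sign_mul hm using 2 with k
  push_cast; ring

lemma near_shift (h : MarkoffApprox ξ a b c X) (hE : NearInt X E s) (n : ℕ) :
    NearInt X (fun k => E (k + n)) (gold ^ n * s) := by
  obtain ⟨m, hm⟩ := hE
  exact ⟨fun k => m (k + n), h.order_shift hm n⟩

lemma near_mono (h : MarkoffApprox ξ a b c X) (hE : NearInt X E s) (hst : s ≤ t) :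
    NearInt X E t := by
  obtain ⟨m, hm⟩ := hE
  exact ⟨m, h.order_mono hm hst⟩

/-- The sign-twisted three-step near-periodicity of `a k * ξ ^ 3` modulo `1`. -/
lemma near_cube (h : MarkoffApprox ξ a b c X) :
    NearInt X (fun k => a (k + 4) * ξ ^ 3 + a (k + 1) * ξ ^ 3) (-gold) := by
  have g2 := gold_sq
  have g3 := gold_pow_three
  refine ⟨fun k => 3 * (b (k + 2) * c (k + 3) - (-1) ^ k * c (k + 1)), ?_⟩
  have t1 : HasOrder X (fun k => 3 * (b (k + 2) * rho ξ a c (k + 3))) (-gold) :=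
    h.order_const_mul _ (h.order_mono (h.order_mul (h.order_b 2) (h.order_rho 3)) (by linarith))
  have t2 : HasOrder X (fun k => -3 * ((-1) ^ k * rho ξ a c (k + 1))) (-gold) :=
    h.order_const_mul _ (h.order_sign_mul (h.order_mono (h.order_rho 1) (by linarith)))
  have t3 : HasOrder X (fun k => (3 * ξ ^ 2) * (a (k + 2) * del ξ a b (k + 3))) (-gold) :=
    h.order_const_mul _ (h.order_mono (h.order_mul (h.order_a 2) (h.order_del 3)) (by linarith))
  convert (t1.add t2).add t3 using 2 with k
  have r := h.real.rec_a (k + 1)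
  have m := h.real.minor_succ (k + 1)
  simp only [del, rho]
  push_cast
  simp only [add_assoc, Nat.reduceAdd] at m r
  rw [pow_succ] at m
  linear_combination ξ ^ 3 * r + 3 * ξ ^ 2 * m

end MarkoffApprox

namespace MarkoffApprox

variable {ξ : ℝ} {a b c : ℕ → ℤ} {X : ℕ → ℝ}

lemma a_mul_rho (h : MarkoffApprox ξ a b c X) (k : ℕ) :
    a k * rho ξ a c k = 2 * ξ * (a k * del ξ a b k) - del ξ a b k ^ 2 - 1 := by
  have := h.real.det k
  simp only [rho, del]
  linear_combination -this

lemma del_succ (h : MarkoffApprox ξ a b c X) (k : ℕ) :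
    a (k + 2) * del ξ a b (k + 1) - a (k + 1) * del ξ a b (k + 2) = (-1) ^ k * a k := by
  have := h.real.minor_succ k
  simp only [del]
  linear_combination this

lemma del_add_two (h : MarkoffApprox ξ a b c X) (k : ℕ) :
    a (k + 2) * del ξ a b k - a k * del ξ a b (k + 2) = -(-1) ^ k * a (k + 1) := by
  have := h.real.minor_add_two k
  simp only [del]
  linear_combination this

lemma del_add_four (h : MarkoffApprox ξ a b c X) (k : ℕ) :
    a (k + 5) * del ξ a b (k + 1) - a (k + 1) * del ξ a b (k + 5) =
      (-1) ^ k * (3 * a (k + 2) * a (k + 4) + a (k + 3)) := by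
  have := h.real.minor_add_four k
  simp only [del]
  linear_combination this

/-- The three-step relation for `a k * ξ ^ 4` modulo `1`. -/
lemma near_fourth (h : MarkoffApprox ξ a b c X) :
    NearInt X (fun k => a (k + 4) * ξ ^ 4 + a (k + 1) * ξ ^ 4 +
      6 * ((-1) ^ k * (a (k + 1) * ξ ^ 3))) (-gold) := by
  have g2 := gold_sq
  have g3 := gold_pow_three
  have l1 := lt_gold
  refine ⟨fun k => 3 * (c (k + 2) * c (k + 3)) - 9 * c (k + 1), ?_⟩
  have t1 : HasOrder X (fun k => 3 * (c (k + 2) * rho ξ a c (k + 3))) (-gold) :=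
    h.order_const_mul _ (h.order_mono (h.order_mul (h.order_c 2) (h.order_rho 3)) (by linarith))
  have t2 : HasOrder X (fun k => (6 * ξ ^ 3) * (a (k + 2) * del ξ a b (k + 3))) (-gold) :=
    h.order_const_mul _ (h.order_mono (h.order_mul (h.order_a 2) (h.order_del 3)) (by linarith))
  have t3 : HasOrder X (fun k => (3 * ξ ^ 2) * (a (k + 0) * (a (k + 2) : ℝ)⁻¹)) (-gold) :=
    h.order_const_mul _ (h.order_mono (h.order_mul (h.order_a 0) (h.order_inv_a 2)) (by linarith))
  have t4 : HasOrder X (fun k => (-3 * ξ ^ 2) * (del ξ a b (k + 2) * del ξ a b (k + 2) *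
      a (k + 3) * (a (k + 2) : ℝ)⁻¹)) (-gold) :=
    h.order_const_mul _ (h.order_mono (h.order_mul (h.order_mul (h.order_mul (h.order_del 2)
      (h.order_del 2)) (h.order_a 3)) (h.order_inv_a 2)) (by linarith))
  have t5 : HasOrder X (fun k => -9 * rho ξ a c (k + 1)) (-gold) :=
    h.order_const_mul _ (h.order_mono (h.order_rho 1) (by linarith))
  convert (((t1.add t2).add t3).add t4).add t5 using 2 with k
  have r3 := h.real.rec_a k
  have r4 := h.real.rec_a (k + 1)
  have m := h.del_succ (k + 1)
  have hρ := h.a_mul_rho (k + 2)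
  have hi := mul_inv_cancel₀ (h.a_ne_zero (k + 2))
  have q1 : (c (k + 1) : ℝ) = a (k + 1) * ξ ^ 2 - rho ξ a c (k + 1) := by simp [rho]
  have q2 : (c (k + 2) : ℝ) = a (k + 2) * ξ ^ 2 - rho ξ a c (k + 2) := by simp [rho]
  have q3 : (c (k + 3) : ℝ) = a (k + 3) * ξ ^ 2 - rho ξ a c (k + 3) := by simp [rho]
  push_cast
  rw [q1, q2, q3]
  simp only [add_assoc, Nat.reduceAdd, add_zero] at m r4 ⊢
  rw [pow_succ] at m
  generalize (a (k + 2) : ℝ)⁻¹ = i at *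
  linear_combination ξ ^ 4 * r4 + 6 * ξ ^ 3 * m + 3 * ξ ^ 2 * a (k + 3) * (i * hρ -
    rho ξ a c (k + 2) * hi) + 6 * ξ ^ 3 * a (k + 3) * del ξ a b (k + 2) * hi -
    3 * ξ ^ 2 * i * r3 - 9 * ξ ^ 2 * a (k + 1) * hi

end MarkoffApprox

namespace MarkoffApprox

variable {ξ : ℝ} {a b c : ℕ → ℤ} {X : ℕ → ℝ}

lemma near_fifth_top (h : MarkoffApprox ξ a b c X) :
    NearInt X (fun k => 9 * a (k + 4) * a (k + 5) ^ 2 * ξ ^ 5 -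
      15 * ((-1) ^ k * (a (k + 4) * ξ ^ 4)) + 36 * (a (k + 4) * ξ ^ 3)) (-gold) := by
  have g2 := gold_sq
  have g3 := gold_pow_three
  have g4 := gold_pow_four
  have g5 := gold_pow_five
  have l1 := lt_gold
  refine ⟨fun k => 9 * (b (k + 4) * c (k + 5) ^ 2) - 9 * ((-1) ^ k * (c (k + 3) * c (k + 5))) +
    27 * ((-1) ^ k * c (k + 4)), ?_⟩
  have t1 : HasOrder X (fun k => -9 * (b (k + 4) * rho ξ a c (k + 5) * rho ξ a c (k + 5)))
      (-gold) :=
    h.order_const_mul _ (h.order_mono (h.order_mul (h.order_mul (h.order_b 4) (h.order_rho 5))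
      (h.order_rho 5)) (by linarith))
  have t2 : HasOrder X (fun k => (36 * ξ ^ 3) * (b (k + 4) * etaDef ξ a b (k + 5))) (-gold) :=
    h.order_const_mul _ (h.order_mono (h.order_mul (h.order_b 4) (h.order_eta 5 (by simp)))
      (by linarith))
  have t3 : HasOrder X (fun k => (-18 * ξ ^ 2) * (b (k + 4) * del ξ a b (k + 5) *
      del ξ a b (k + 5))) (-gold) :=
    h.order_const_mul _ (h.order_mono (h.order_mul (h.order_mul (h.order_b 4) (h.order_del 5))
      (h.order_del 5)) (by linarith))
  have t4 : HasOrder X (fun k => (-12 * ξ ^ 3) * ((-1) ^ k * del ξ a b (k + 4))) (-gold) :=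
    h.order_const_mul _ (h.order_sign_mul (h.order_mono (h.order_del 4) (by linarith)))
  have t5 : HasOrder X (fun k => (18 * ξ ^ 2) * del ξ a b (k + 4)) (-gold) :=
    h.order_const_mul _ (h.order_mono (h.order_del 4) (by linarith))
  have t6 : HasOrder X (fun k => (9 * ξ ^ 4) * (a (k + 4) * etaDef ξ a b (k + 5))) (-gold) :=
    h.order_const_mul _ (h.order_mono (h.order_mul (h.order_a 4) (h.order_eta 5 (by simp)))
      (by linarith))
  have t7 : HasOrder X (fun k => -9 * ((-1) ^ k * (c (k + 3) * rho ξ a c (k + 5)))) (-gold) :=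
    h.order_const_mul _ (h.order_sign_mul (h.order_mono (h.order_mul (h.order_c 3)
      (h.order_rho 5)) (by linarith)))
  have t8 : HasOrder X (fun k => (-18 * ξ ^ 3) * ((-1) ^ k * (a (k + 3) * del ξ a b (k + 5))))
      (-gold) :=
    h.order_const_mul _ (h.order_sign_mul (h.order_mono (h.order_mul (h.order_a 3)
      (h.order_del 5)) (by linarith)))
  have t9 : HasOrder X (fun k => (-9 * ξ ^ 2) * ((-1) ^ k * (a (k + 2) * (a (k + 3) : ℝ)⁻¹)))
      (-gold) :=
    h.order_const_mul _ (h.order_sign_mul (h.order_mono (h.order_mul (h.order_a 2)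
      (h.order_inv_a 3)) (by linarith)))
  have t10 : HasOrder X (fun k => (9 * ξ ^ 2) * ((-1) ^ k * (del ξ a b (k + 3) *
      del ξ a b (k + 3) * a (k + 5) * (a (k + 3) : ℝ)⁻¹))) (-gold) :=
    h.order_const_mul _ (h.order_sign_mul (h.order_mono (h.order_mul (h.order_mul (h.order_mul
      (h.order_del 3) (h.order_del 3)) (h.order_a 5)) (h.order_inv_a 3)) (by linarith)))
  have t11 : HasOrder X (fun k => 27 * ((-1) ^ k * rho ξ a c (k + 4))) (-gold) :=
    h.order_const_mul _ (h.order_sign_mul (h.order_mono (h.order_rho 4) (by linarith)))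
  convert (((((((((t1.add t2).add t3).add t4).add t5).add t6).add t7).add t8).add t9).add
    t10).add t11 using 2 with k
  have r5 := h.real.rec_a (k + 2)
  have Hs := h.del_succ (k + 3)
  have Hz := h.del_add_two (k + 3)
  have Hu := h.a_mul_rho (k + 5)
  have Hr := h.a_mul_rho (k + 3)
  have hi := mul_inv_cancel₀ (h.a_ne_zero (k + 3))
  have q3 : (c (k + 3) : ℝ) = a (k + 3) * ξ ^ 2 - rho ξ a c (k + 3) := by simp [rho]
  have q4 : (c (k + 4) : ℝ) = a (k + 4) * ξ ^ 2 - rho ξ a c (k + 4) := by simp [rho]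
  have q5 : (c (k + 5) : ℝ) = a (k + 5) * ξ ^ 2 - rho ξ a c (k + 5) := by simp [rho]
  have p4 : (b (k + 4) : ℝ) = a (k + 4) * ξ - del ξ a b (k + 4) := by simp [del]
  have n5 : etaDef ξ a b (k + 5) = a (k + 5) * del ξ a b (k + 5) + (-1) ^ (k + 5) / 3 := rfl
  have e2 := neg_one_pow_mul_self (R := ℝ) k
  push_cast
  rw [q3, q4, q5, p4, n5]
  simp only [add_assoc, Nat.reduceAdd, pow_add] at *
  generalize (a (k + 3) : ℝ)⁻¹ = i at *
  generalize (-1 : ℝ) ^ k = e at *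
  linear_combination 18 * ξ ^ 2 * (a (k + 4) * ξ - del ξ a b (k + 4)) * Hu +
    9 * ξ ^ 4 * a (k + 5) * Hs - 9 * e * ξ ^ 2 * a (k + 5) * (i * Hr - rho ξ a c (k + 3) * hi) -
    18 * e * ξ ^ 3 * a (k + 5) * del ξ a b (k + 3) * hi - 18 * e * ξ ^ 3 * Hz +
    9 * e * ξ ^ 2 * i * r5 + 27 * e * ξ ^ 2 * a (k + 4) * hi - 18 * ξ ^ 3 * a (k + 4) * e2

lemma near_fifth_bot (h : MarkoffApprox ξ a b c X) :
    NearInt X (fun k => 9 * a (k + 4) * a (k + 3) ^ 2 * ξ ^ 5 -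
      12 * ((-1) ^ k * (a (k + 4) * ξ ^ 4)) + 18 * (a (k + 4) * ξ ^ 3) +
      3 * ((-1) ^ k * (a (k + 1) * ξ ^ 4))) (-gold) := by
  have g2 := gold_sq
  have g3 := gold_pow_three
  have g4 := gold_pow_four
  have l1 := lt_gold
  refine ⟨fun k => 9 * (b (k + 4) * c (k + 3) ^ 2), ?_⟩
  have t1 : HasOrder X (fun k => -9 * (b (k + 4) * rho ξ a c (k + 3) * rho ξ a c (k + 3)))
      (-gold) :=
    h.order_const_mul _ (h.order_mono (h.order_mul (h.order_mul (h.order_b 4) (h.order_rho 3))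
      (h.order_rho 3)) (by linarith))
  have t2 : HasOrder X (fun k => (36 * ξ ^ 3) * (b (k + 4) * etaDef ξ a b (k + 3))) (-gold) :=
    h.order_const_mul _ (h.order_mono (h.order_mul (h.order_b 4) (h.order_eta 3 (by simp)))
      (by linarith))
  have t3 : HasOrder X (fun k => (-18 * ξ ^ 2) * (b (k + 4) * del ξ a b (k + 3) *
      del ξ a b (k + 3))) (-gold) :=
    h.order_const_mul _ (h.order_mono (h.order_mul (h.order_mul (h.order_b 4) (h.order_del 3))
      (h.order_del 3)) (by linarith))
  have t4 : HasOrder X (fun k => (-12 * ξ ^ 3) * ((-1) ^ k * del ξ a b (k + 4))) (-gold) :=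
    h.order_const_mul _ (h.order_sign_mul (h.order_mono (h.order_del 4) (by linarith)))
  have t5 : HasOrder X (fun k => (18 * ξ ^ 2) * del ξ a b (k + 4)) (-gold) :=
    h.order_const_mul _ (h.order_mono (h.order_del 4) (by linarith))
  have t6 : HasOrder X (fun k => (-3 * ξ ^ 4) * ((-1) ^ k * (a (k + 1) * a (k + 1) *
      (a (k + 4) : ℝ)⁻¹))) (-gold) :=
    h.order_const_mul _ (h.order_sign_mul (h.order_mono (h.order_mul (h.order_mul (h.order_a 1)
      (h.order_a 1)) (h.order_inv_a 4)) (by linarith)))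
  have t7 : HasOrder X (fun k => (3 * ξ ^ 4) * ((-1) ^ k * (a (k + 0) * a (k + 3) *
      (a (k + 4) : ℝ)⁻¹))) (-gold) :=
    h.order_const_mul _ (h.order_sign_mul (h.order_mono (h.order_mul (h.order_mul (h.order_a 0)
      (h.order_a 3)) (h.order_inv_a 4)) (by linarith)))
  have t8 : HasOrder X (fun k => (9 * ξ ^ 4) * (etaDef ξ a b (k + 4) * a (k + 3) * a (k + 3) *
      (a (k + 4) : ℝ)⁻¹)) (-gold) :=
    h.order_const_mul _ (h.order_mono (h.order_mul (h.order_mul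
      (h.order_mul (h.order_eta 4 (by simp))
      (h.order_a 3)) (h.order_a 3)) (h.order_inv_a 4)) (by linarith))
  convert ((((((t1.add t2).add t3).add t4).add t5).add t6).add t7).add t8 using 2 with k
  have r3 := h.real.rec_a k
  have r4 := h.real.rec_a (k + 1)
  have Hr := h.a_mul_rho (k + 3)
  have hi := mul_inv_cancel₀ (h.a_ne_zero (k + 4))
  have q3 : (c (k + 3) : ℝ) = a (k + 3) * ξ ^ 2 - rho ξ a c (k + 3) := by simp [rho]
  have p4 : (b (k + 4) : ℝ) = a (k + 4) * ξ - del ξ a b (k + 4) := by simp [del]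
  have n3 : etaDef ξ a b (k + 3) = a (k + 3) * del ξ a b (k + 3) + (-1) ^ (k + 3) / 3 := rfl
  have n4 : etaDef ξ a b (k + 4) = a (k + 4) * del ξ a b (k + 4) + (-1) ^ (k + 4) / 3 := rfl
  push_cast
  rw [q3, p4, n3, n4]
  simp only [add_assoc, Nat.reduceAdd, pow_add, add_zero] at *
  generalize (a (k + 4) : ℝ)⁻¹ = i at *
  generalize (-1 : ℝ) ^ k = e at *
  linear_combination 18 * ξ ^ 2 * (a (k + 4) * ξ - del ξ a b (k + 4)) * Hr -
    9 * ξ ^ 4 * a (k + 3) ^ 2 * del ξ a b (k + 4) * hi - 3 * e * ξ ^ 4 * (i * (a (k + 3) * r3 -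
    a (k + 1) * r4) + a (k + 1) * hi)

/-- The six-step near-periodicity of `a k * ξ ^ 5` modulo `1`. -/
lemma near_fifth (h : MarkoffApprox ξ a b c X) :
    NearInt X (fun k => a (k + 7) * ξ ^ 5 - a (k + 1) * ξ ^ 5) (-gold) := by
  have h1 := h.near_intCast_mul h.near_fifth_bot (-1)
  have h2 := h.near_intCast_mul (h.near_sign_mul h.near_fourth) 3
  have h3 := h.near_intCast_mul h.near_cube (-18)
  refine (((h.near_fifth_top.add h1).add h2).add h3).congr fun k => ?_
  have r4 := h.real.rec_a (k + 1)
  have r5 := h.real.rec_a (k + 2)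
  have r6 := h.real.rec_a (k + 3)
  have r7 := h.real.rec_a (k + 4)
  have e2 := neg_one_pow_mul_self (R := ℝ) k
  simp only [add_assoc, Nat.reduceAdd] at *
  push_cast
  generalize (-1 : ℝ) ^ k = e at *
  linear_combination ξ ^ 5 * (r7 + 3 * a (k + 5) * r6 - r4 - 3 * a (k + 3) * r5) -
    18 * a (k + 1) * ξ ^ 3 * e2

end MarkoffApprox

namespace MarkoffApprox

open MarkoffTriple

variable {ξ : ℝ} {a b c : ℕ → ℤ} {X : ℕ → ℝ}

lemma del_add_three (h : MarkoffApprox ξ a b c X) (k : ℕ) :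
    a (k + 4) * del ξ a b (k + 1) - a (k + 1) * del ξ a b (k + 4) =
      3 * (-1) ^ k * a (k + 2) ^ 2 := by
  have m := h.del_add_two (k + 1)
  have r := h.real.rec_a (k + 1)
  have r' := h.real.rec_b (k + 1)
  simp only [del, add_assoc, Nat.reduceAdd, pow_add] at *
  linear_combination 3 * a (k + 2) * m - b (k + 1) * r + a (k + 1) * r'

lemma c_eq (k : ℕ) : (c k : ℝ) = a k * ξ ^ 2 - rho ξ a c k := by simp [rho]

lemma b_eq (k : ℕ) : (b k : ℝ) = a k * ξ - del ξ a b k := by simp [del]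

lemma order_near3' (h : MarkoffApprox ξ a b c X) :
    HasOrder X (fun k => a (k + 1) * (a (k + 3) * ξ ^ 3) - (near3' b c k : ℤ)) (-gold ^ 2) := by
  have g2 := gold_sq
  have g3 := gold_pow_three
  have t1 : HasOrder X (fun k => b (k + 1) * rho ξ a c (k + 3)) (-gold ^ 2) :=
    h.order_mono (h.order_mul (h.order_b 1) (h.order_rho 3)) (by linarith)
  have t2 : HasOrder X (fun k => ξ ^ 2 * (a (k + 1) * del ξ a b (k + 3))) (-gold ^ 2) :=
    h.order_const_mul _ (h.order_mono (h.order_mul (h.order_a 1) (h.order_del 3)) (by linarith))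
  have t3 : HasOrder X (fun k => (-1) ^ k * rho ξ a c (k + 2)) (-gold ^ 2) :=
    h.order_sign_mul (h.order_rho 2)
  convert (t1.add t2).add t3 using 2 with k
  have m := h.del_add_two (k + 1)
  simp only [near3']
  push_cast
  rw [b_eq (ξ := ξ) (a := a) (b := b), c_eq (ξ := ξ) (a := a) (c := c) (k + 2),
    c_eq (ξ := ξ) (a := a) (c := c) (k + 3)]
  simp only [add_assoc, Nat.reduceAdd, pow_add] at *
  linear_combination ξ ^ 2 * m

lemma order_near3 (h : MarkoffApprox ξ a b c X) :
    HasOrder X (fun k => a (k + 1) * (a (k + 5) * ξ ^ 3) - (near3 a b c k : ℤ)) (-gold ^ 3) := by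
  have g2 := gold_sq
  have g3 := gold_pow_three
  have g4 := gold_pow_four
  have g5 := gold_pow_five
  have l1 := lt_gold
  have t1 : HasOrder X (fun k => b (k + 1) * rho ξ a c (k + 5)) (-gold ^ 3) :=
    h.order_mono (h.order_mul (h.order_b 1) (h.order_rho 5)) (by linarith)
  have t2 : HasOrder X (fun k => ξ ^ 2 * (a (k + 1) * del ξ a b (k + 5))) (-gold ^ 3) :=
    h.order_const_mul _ (h.order_mono (h.order_mul (h.order_a 1) (h.order_del 5)) (by linarith))
  have t3 : HasOrder X (fun k => 3 * ((-1) ^ k * (a (k + 2) * rho ξ a c (k + 4)))) (-gold ^ 3) :=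
    h.order_const_mul _ (h.order_sign_mul (h.order_mono (h.order_mul (h.order_a 2)
      (h.order_rho 4)) (by linarith)))
  have t4 : HasOrder X (fun k => (-1) ^ k * rho ξ a c (k + 3)) (-gold ^ 3) :=
    h.order_sign_mul (h.order_rho 3)
  convert ((t1.add t2).add t3).add t4 using 2 with k
  have m := h.del_add_four k
  simp only [near3]
  push_cast
  rw [b_eq (ξ := ξ) (a := a) (b := b), c_eq (ξ := ξ) (a := a) (c := c) (k + 3),
    c_eq (ξ := ξ) (a := a) (c := c) (k + 4),
    c_eq (ξ := ξ) (a := a) (c := c) (k + 5)]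
  linear_combination ξ ^ 2 * m

lemma order_near4 (h : MarkoffApprox ξ a b c X) :
    HasOrder X (fun k => a (k + 1) ^ 2 * (a (k + 5) * ξ ^ 4) - (near4 a b c k : ℤ))
      (-gold ^ 2) := by
  have g2 := gold_sq
  have g3 := gold_pow_three
  have g4 := gold_pow_four
  have g5 := gold_pow_five
  have l1 := lt_gold
  have t1 : HasOrder X (fun k => b (k + 1) * b (k + 1) * rho ξ a c (k + 5)) (-gold ^ 2) :=
    h.order_mono (h.order_mul (h.order_mul (h.order_b 1) (h.order_b 1)) (h.order_rho 5))
      (by linarith)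
  have t2 : HasOrder X (fun k => (2 * ξ ^ 2) * (b (k + 1) * a (k + 1) * del ξ a b (k + 5)))
      (-gold ^ 2) :=
    h.order_const_mul _ (h.order_mono (h.order_mul (h.order_mul (h.order_b 1) (h.order_a 1))
      (h.order_del 5)) (by linarith))
  have t3 : HasOrder X (fun k => ξ ^ 2 * (del ξ a b (k + 1) * a (k + 1) * del ξ a b (k + 5)))
      (-gold ^ 2) :=
    h.order_const_mul _ (h.order_mono (h.order_mul (h.order_mul (h.order_del 1) (h.order_a 1))
      (h.order_del 5)) (by linarith))
  have t4 : HasOrder X (fun k => 6 * ((-1) ^ k * (b (k + 1) * a (k + 2) * rho ξ a c (k + 4))))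
      (-gold ^ 2) :=
    h.order_const_mul _ (h.order_sign_mul (h.order_mono (h.order_mul (h.order_mul (h.order_b 1)
      (h.order_a 2)) (h.order_rho 4)) (by linarith)))
  have t5 : HasOrder X (fun k => 2 * ((-1) ^ k * (b (k + 1) * rho ξ a c (k + 3)))) (-gold ^ 2) :=
    h.order_const_mul _ (h.order_sign_mul (h.order_mono (h.order_mul (h.order_b 1)
      (h.order_rho 3)) (by linarith)))
  have t6 : HasOrder X (fun k => (3 * ξ ^ 2) * ((-1) ^ k * (a (k + 2) * a (k + 1) *
      del ξ a b (k + 4)))) (-gold ^ 2) :=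
    h.order_const_mul _ (h.order_sign_mul (h.order_mono (h.order_mul (h.order_mul (h.order_a 2)
      (h.order_a 1)) (h.order_del 4)) (by linarith)))
  have t7 : HasOrder X (fun k => ξ ^ 2 * ((-1) ^ k * (a (k + 1) * del ξ a b (k + 3))))
      (-gold ^ 2) :=
    h.order_const_mul _ (h.order_sign_mul (h.order_mono (h.order_mul (h.order_a 1)
      (h.order_del 3)) (by linarith)))
  have t8 : HasOrder X (fun k => (18 * ξ) * (a (k + 2) * etaDef ξ a b (k + 2))) (-gold ^ 2) :=
    h.order_const_mul _ (h.order_mono (h.order_mul (h.order_a 2) (h.order_eta 2 (by simp)))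
      (by linarith))
  have t9 : HasOrder X (fun k => -6 * ((-1) ^ k * del ξ a b (k + 2))) (-gold ^ 2) :=
    h.order_const_mul _ (h.order_sign_mul (h.order_del 2))
  have t10 : HasOrder X (fun k => -9 * (a (k + 2) * del ξ a b (k + 2) * del ξ a b (k + 2)))
      (-gold ^ 2) :=
    h.order_const_mul _ (h.order_mono (h.order_mul (h.order_mul (h.order_a 2) (h.order_del 2))
      (h.order_del 2)) (by linarith))
  convert (((((((((t1.add t2).add t3).add t4).add t5).add t6).add t7).add t8).add t9).add
    t10).add (h.order_rho 2) using 2 with k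
  have m4 := h.del_add_four k
  have m3 := h.del_add_three k
  have m2 := h.del_add_two (k + 1)
  have hr := h.a_mul_rho (k + 2)
  have e2 := neg_one_pow_mul_self (R := ℝ) k
  have n2 : etaDef ξ a b (k + 2) = a (k + 2) * del ξ a b (k + 2) + (-1) ^ (k + 2) / 3 := rfl
  simp only [near4]
  push_cast
  rw [b_eq (ξ := ξ) (a := a) (b := b) (k + 1), b_eq (ξ := ξ) (a := a) (b := b) (k + 2),
    c_eq (ξ := ξ) (a := a) (c := c) (k + 2), c_eq (ξ := ξ) (a := a) (c := c) (k + 3),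
    c_eq (ξ := ξ) (a := a) (c := c) (k + 4), c_eq (ξ := ξ) (a := a) (c := c) (k + 5), n2]
  simp only [add_assoc, Nat.reduceAdd, pow_add] at *
  generalize (-1 : ℝ) ^ k = e at *
  linear_combination (2 * a (k + 1) * ξ - del ξ a b (k + 1)) * ξ ^ 2 * m4 +
    3 * e * ξ ^ 2 * a (k + 2) * m3 + e * ξ ^ 2 * m2 + 9 * a (k + 2) * hr +
    ξ ^ 2 * (9 * a (k + 2) ^ 3 + a (k + 2)) * e2

end MarkoffApprox

namespace MarkoffApprox

open MarkoffTriple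

variable {ξ : ℝ} {a b c : ℕ → ℤ} {X : ℕ → ℝ}

lemma order_near5_cubic_part (h : MarkoffApprox ξ a b c X) :
    HasOrder X (fun k => 9 * a (k + 2) ^ 3 * ξ ^ 2 * (3 * b (k + 1) + del ξ a b (k + 1)) -
      (3 * b (k + 1) * c (k + 2) + 3 * b (k + 2) * c (k + 4) + 9 * a k * b (k + 2) * c (k + 2) +
        3 * b k - (-1) ^ k * (c (k + 3) + 4 * c k + 18 * a k * b (k + 2) ^ 2))) (-1) := by
  have g2 := gold_sq
  have g3 := gold_pow_three
  have g4 := gold_pow_four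
  have l1 := lt_gold
  have t1 : HasOrder X (fun k => 3 * (b (k + 2) * rho ξ a c (k + 4))) (-1) :=
    h.order_const_mul _ (h.order_mono (h.order_mul (h.order_b 2) (h.order_rho 4)) (by linarith))
  have t2 : HasOrder X (fun k => (3 * ξ ^ 2) * (a (k + 2) * del ξ a b (k + 4))) (-1) :=
    h.order_const_mul _ (h.order_mono (h.order_mul (h.order_a 2) (h.order_del 4)) (by linarith))
  have t3 : HasOrder X (fun k => -1 * ((-1) ^ k * rho ξ a c (k + 3))) (-1) :=
    h.order_const_mul _ (h.order_sign_mul (h.order_mono (h.order_rho 3) (by linarith)))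
  have t4 : HasOrder X (fun k => 3 * (b (k + 1) * rho ξ a c (k + 2))) (-1) :=
    h.order_const_mul _ (h.order_mono (h.order_mul (h.order_b 1) (h.order_rho 2)) (by linarith))
  have t5 : HasOrder X (fun k => (3 * ξ ^ 2) * (a (k + 1) * del ξ a b (k + 2))) (-1) :=
    h.order_const_mul _ (h.order_mono (h.order_mul (h.order_a 1) (h.order_del 2)) (by linarith))
  have t6 : HasOrder X (fun k => -4 * ((-1) ^ k * rho ξ a c (k + 0))) (-1) :=
    h.order_const_mul _ (h.order_sign_mul (h.order_mono (h.order_rho 0) (by linarith)))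
  have t7 : HasOrder X (fun k => 3 * del ξ a b (k + 0)) (-1) :=
    h.order_const_mul _ (h.order_mono (h.order_del 0) (by linarith))
  have t8 : HasOrder X (fun k => (27 * ξ ^ 2) * (a (k + 0) * etaDef ξ a b (k + 2))) (-1) :=
    h.order_const_mul _ (h.order_mono (h.order_mul (h.order_a 0) (h.order_eta 2 (by simp)))
      (by linarith))
  have t9 : HasOrder X (fun k => (-36 * ξ) * ((-1) ^ k * (a (k + 0) * etaDef ξ a b (k + 2))))
      (-1) :=
    h.order_const_mul _ (h.order_sign_mul (h.order_mono (h.order_mul (h.order_a 0)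
      (h.order_eta 2 (by simp))) (by linarith)))
  have t10 : HasOrder X (fun k => (-9 * ξ) * (a (k + 0) * del ξ a b (k + 2) * del ξ a b (k + 2)))
      (-1) :=
    h.order_const_mul _ (h.order_mono (h.order_mul (h.order_mul (h.order_a 0) (h.order_del 2))
      (h.order_del 2)) (by linarith))
  have t11 : HasOrder X (fun k => -9 * (a (k + 0) * del ξ a b (k + 2) * rho ξ a c (k + 2)))
      (-1) :=
    h.order_const_mul _ (h.order_mono (h.order_mul (h.order_mul (h.order_a 0) (h.order_del 2))
      (h.order_rho 2)) (by linarith))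
  have t12 : HasOrder X (fun k => 18 * ((-1) ^ k * (a (k + 0) * del ξ a b (k + 2) *
      del ξ a b (k + 2)))) (-1) :=
    h.order_const_mul _ (h.order_sign_mul (h.order_mono (h.order_mul (h.order_mul (h.order_a 0)
      (h.order_del 2)) (h.order_del 2)) (by linarith)))
  have t13 : HasOrder X (fun k => (-18 * ξ ^ 2) * (a (k + 2) * a (k + 1) *
      etaDef ξ a b (k + 2))) (-1) :=
    h.order_const_mul _ (h.order_mono (h.order_mul (h.order_mul (h.order_a 2) (h.order_a 1))
      (h.order_eta 2 (by simp))) (by linarith))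
  convert (((((((((((t1.add t2).add t3).add t4).add t5).add t6).add t7).add t8).add t9).add
    t10).add t11).add t12).add t13 using 2 with k
  have m1 := h.del_succ k
  have m2 := h.del_add_two (k + 2)
  have r3 := h.real.rec_a k
  have r4 := h.real.rec_a (k + 1)
  have hr := h.a_mul_rho (k + 2)
  have e2 := neg_one_pow_mul_self (R := ℝ) k
  have n2 : etaDef ξ a b (k + 2) = a (k + 2) * del ξ a b (k + 2) + (-1) ^ (k + 2) / 3 := rfl
  rw [b_eq (ξ := ξ) (a := a) (b := b) k, b_eq (ξ := ξ) (a := a) (b := b) (k + 1),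
    b_eq (ξ := ξ) (a := a) (b := b) (k + 2), c_eq (ξ := ξ) (a := a) (c := c) k,
    c_eq (ξ := ξ) (a := a) (c := c) (k + 2), c_eq (ξ := ξ) (a := a) (c := c) (k + 3),
    c_eq (ξ := ξ) (a := a) (c := c) (k + 4), n2]
  simp only [add_assoc, Nat.reduceAdd, pow_add, add_zero] at *
  generalize (-1 : ℝ) ^ k = e at *
  linear_combination (3 * ξ ^ 2 - 18 * a (k + 2) ^ 2 * ξ ^ 2) * m1 + 3 * ξ ^ 2 * m2 -
    (9 * a (k + 2) ^ 2 * ξ ^ 3 + 2 * e * ξ ^ 2) * r3 - 3 * a (k + 2) * ξ ^ 3 * r4 +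
    9 * a k * ξ * hr +
    12 * ξ * a k * e2

lemma order_near5 (h : MarkoffApprox ξ a b c X) :
    HasOrder X (fun k => a (k + 1) ^ 3 * (a (k + 5) * ξ ^ 5) - (near5 a b c k : ℤ)) (-1) := by
  have g2 := gold_sq
  have g3 := gold_pow_three
  have g4 := gold_pow_four
  have g5 := gold_pow_five
  have l1 := lt_gold
  have b2 := h.order_mul (h.order_b 1) (h.order_b 1)
  have bd := h.order_mono (h.order_del 1) (by linarith : -gold ^ 1 ≤ gold ^ 1)
  have b3 : HasOrder X (fun k => 3 * b (k + 1) + del ξ a b (k + 1)) (gold ^ 1) :=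
    (h.order_const_mul 3 (h.order_b 1)).add bd
  have t1 : HasOrder X (fun k => b (k + 1) * b (k + 1) * b (k + 1) * rho ξ a c (k + 5)) (-1) :=
    h.order_mono (h.order_mul (h.order_mul b2 (h.order_b 1)) (h.order_rho 5)) (by linarith)
  have t2 : HasOrder X (fun k => (3 * ξ ^ 2) * (b (k + 1) * b (k + 1) * a (k + 1) *
      del ξ a b (k + 5))) (-1) :=
    h.order_const_mul _ (h.order_mono (h.order_mul (h.order_mul b2 (h.order_a 1))
      (h.order_del 5)) (by linarith))
  have t3 : HasOrder X (fun k => ξ ^ 2 * ((3 * b (k + 1) + del ξ a b (k + 1)) *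
      del ξ a b (k + 1) * a (k + 1) * del ξ a b (k + 5))) (-1) :=
    h.order_const_mul _ (h.order_mono (h.order_mul (h.order_mul (h.order_mul b3 (h.order_del 1))
      (h.order_a 1)) (h.order_del 5)) (by linarith))
  have t4 : HasOrder X (fun k => 9 * ((-1) ^ k * (b (k + 1) * b (k + 1) * a (k + 2) *
      rho ξ a c (k + 4)))) (-1) :=
    h.order_const_mul _ (h.order_sign_mul (h.order_mono (h.order_mul (h.order_mul b2
      (h.order_a 2)) (h.order_rho 4)) (by linarith)))
  have t5 : HasOrder X (fun k => 3 * ((-1) ^ k * (b (k + 1) * b (k + 1) * rho ξ a c (k + 3))))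
      (-1) :=
    h.order_const_mul _ (h.order_sign_mul (h.order_mono (h.order_mul b2 (h.order_rho 3))
      (by linarith)))
  have t6 : HasOrder X (fun k => (3 * ξ ^ 2) * ((-1) ^ k * ((3 * b (k + 1) +
      del ξ a b (k + 1)) * a (k + 2) * a (k + 1) * del ξ a b (k + 4)))) (-1) :=
    h.order_const_mul _ (h.order_sign_mul (h.order_mono (h.order_mul (h.order_mul (h.order_mul b3
      (h.order_a 2)) (h.order_a 1)) (h.order_del 4)) (by linarith)))
  have t7 : HasOrder X (fun k => ξ ^ 2 * ((-1) ^ k * ((3 * b (k + 1) +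
      del ξ a b (k + 1)) * a (k + 1) * del ξ a b (k + 3)))) (-1) :=
    h.order_const_mul _ (h.order_sign_mul (h.order_mono (h.order_mul (h.order_mul b3
      (h.order_a 1)) (h.order_del 3)) (by linarith)))
  have t8 : HasOrder X (fun k => 3 * (b (k + 1) * rho ξ a c (k + 2))) (-1) :=
    h.order_const_mul _ (h.order_mono (h.order_mul (h.order_b 1) (h.order_rho 2)) (by linarith))
  have t9 : HasOrder X (fun k => ξ ^ 2 * (a (k + 1) * del ξ a b (k + 2))) (-1) :=
    h.order_const_mul _ (h.order_mono (h.order_mul (h.order_a 1) (h.order_del 2)) (by linarith))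
  have t10 : HasOrder X (fun k => (-1) ^ k * rho ξ a c (k + 0)) (-1) :=
    h.order_sign_mul (h.order_mono (h.order_rho 0) (by linarith))
  convert (((((((((t1.add t2).add t3).add t4).add t5).add t6).add t7).add t8).add t9).add
    t10).add h.order_near5_cubic_part using 2 with k
  have m1 := h.del_succ k
  have m2 := h.del_add_two (k + 1)
  have m3 := h.del_add_three k
  have m4 := h.del_add_four k
  have e2 := neg_one_pow_mul_self (R := ℝ) k
  have p1 := b_eq (ξ := ξ) (a := a) (b := b) (k + 1)
  have q0 := c_eq (ξ := ξ) (a := a) (c := c) k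
  have q2 := c_eq (ξ := ξ) (a := a) (c := c) (k + 2)
  have q3 := c_eq (ξ := ξ) (a := a) (c := c) (k + 3)
  have q4 := c_eq (ξ := ξ) (a := a) (c := c) (k + 4)
  have q5 := c_eq (ξ := ξ) (a := a) (c := c) (k + 5)
  simp only [near5]
  push_cast
  rw [q0, q2, q3, q4, q5, p1]
  simp only [add_assoc, Nat.reduceAdd, pow_add, add_zero] at *
  generalize (-1 : ℝ) ^ k = e at *
  linear_combination
    (3 * (a (k + 1) * ξ - del ξ a b (k + 1)) ^ 2 + 3 * (a (k + 1) * ξ - del ξ a b (k + 1)) *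
      del ξ a b (k + 1) + del ξ a b (k + 1) ^ 2) * ξ ^ 2 * m4 +
    (3 * (a (k + 1) * ξ - del ξ a b (k + 1)) + del ξ a b (k + 1)) * ξ ^ 2 *
      (e * (3 * a (k + 2) * m3 + m2) + (9 * a (k + 2) ^ 3 + a (k + 2)) * e2) + ξ ^ 2 * m1

end MarkoffApprox

namespace MarkoffApprox

open MarkoffTriple

variable {ξ : ℝ} {a b c : ℕ → ℤ} {X E : ℕ → ℝ} {s : ℝ}

lemma mono (h : MarkoffApprox ξ a b c X) : Monotone X :=
  monotone_nat_of_le_succ fun k => by linarith [h.two_mul_le k, h.pos k]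

lemma rpow_unshift (h : MarkoffApprox ξ a b c X) (s : ℝ) :
    ∃ C, 0 < C ∧ ∀ k, X k ^ (gold * s) ≤ C * X (k + 1) ^ s := by
  obtain ⟨C, hC, hg⟩ := h.order_succ (h.order_X (-s))
  refine ⟨C, hC, fun k => ?_⟩
  have h1 := h.pos k
  have h2 := h.pos (k + 1)
  have : |X (k + 1) ^ (-s)| ≤ _ := hg k
  rw [abs_of_pos (by positivity), mul_neg, Real.rpow_neg h1.le, Real.rpow_neg h2.le,
    ← div_eq_mul_inv, inv_le_comm₀ (by positivity) (by positivity), inv_div,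
    div_le_iff₀ hC] at this
  linarith

lemma order_unshift (h : MarkoffApprox ξ a b c X) {f : ℕ → ℝ} (hf : HasOrder X f (gold * s)) :
    ∃ C, 0 < C ∧ ∀ k, |f k| ≤ C * X (k + 1) ^ s := by
  obtain ⟨C, hC, hf⟩ := hf
  obtain ⟨D, hD, hu⟩ := h.rpow_unshift s
  refine ⟨C * D, by positivity, fun k => (hf k).trans ?_⟩
  rw [mul_assoc]
  gcongr
  exact hu k

lemma near_iterate (h : MarkoffApprox ξ a b c X) {p : ℕ} (hp : 1 ≤ p) {σ : ℤ} (hσ : |σ| = 1)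
    (hs : s ≤ -1) (hE : NearInt X (fun k => E (k + p) - σ * E k) s) :
    ∃ C, 0 < C ∧ ∀ m k, ∃ n : ℤ, |E (k + p * m) - σ ^ m * E k - n| ≤ C * X k ^ s := by
  obtain ⟨n, C, hC, hn⟩ := hE
  refine ⟨2 * C, by positivity, fun m => ?_⟩
  induction m with
  | zero =>
    intro k
    have := h.pos k
    exact ⟨0, by simp; positivity⟩
  | succ m ih =>
    intro k
    obtain ⟨n', hn'⟩ := ih (k + p)
    refine ⟨n' + σ ^ m * n k, ?_⟩
    have h0 := h.pos k
    have h1 : X (k + p) ^ s ≤ X k ^ s / 2 := by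
      have h2 : 2 * X k ≤ X (k + p) :=
        (h.two_mul_le k).trans (h.mono (by omega))
      calc X (k + p) ^ s ≤ (2 * X k) ^ s :=
            Real.rpow_le_rpow_of_nonpos (by positivity) h2 (by linarith)
        _ = 2 ^ s * X k ^ s := Real.mul_rpow (by norm_num) h0.le
        _ ≤ 2 ^ (-1 : ℝ) * X k ^ s := by gcongr; norm_num
        _ = _ := by rw [Real.rpow_neg_one]; ring
    have h2 : |(σ : ℝ) ^ m * (E (k + p) - σ * E k - n k)| ≤ C * X k ^ s := by
      have : |(σ : ℝ)| = 1 := by exact_mod_cast hσ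
      rw [abs_mul, abs_pow, this, one_pow, one_mul]
      exact hn k
    have h3 : E (k + p * (m + 1)) - σ ^ (m + 1) * E k - (n' + σ ^ m * n k : ℤ) =
        (E (k + p + p * m) - σ ^ m * E (k + p) - n') +
          σ ^ m * (E (k + p) - σ * E k - n k) := by
      push_cast
      rw [show k + p * (m + 1) = k + p + p * m by ring]
      ring
    rw [h3]
    calc _ ≤ _ := abs_add_le _ _
      _ ≤ 2 * C * (X k ^ s / 2) + C * X k ^ s := by
        refine add_le_add (hn'.trans ?_) h2
        gcongr
      _ = _ := by ring

/-- The near-periodicity of `a k * ξ ^ i` modulo `1` for `3 ≤ i ≤ 5`. -/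
lemma near_six (h : MarkoffApprox ξ a b c X) {i : ℕ} (hi : i ∈ Finset.Icc 3 5) :
    NearInt X (fun k => a (k + 7) * ξ ^ i - a (k + 1) * ξ ^ i) (-gold) := by
  have g2 := gold_sq
  have g3 := gold_pow_three
  have l1 := gold_pos
  have hl : gold ^ 3 * -gold ≤ -gold := by nlinarith
  have c0 := h.near_cube
  have c3 := h.near_mono (h.near_shift c0 3) hl
  have q0 := h.near_fourth
  have q3 := h.near_mono (h.near_shift q0 3) hl
  fin_cases hi
  · refine (c3.add (h.near_intCast_mul c0 (-1))).congr fun k => ?_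
    simp only [add_assoc, Nat.reduceAdd]
    push_cast
    ring
  · refine ((q3.add (h.near_intCast_mul q0 (-1))).add
      (h.near_intCast_mul (h.near_sign_mul c0) 6)).congr fun k => ?_
    simp only [add_assoc, Nat.reduceAdd, pow_add]
    push_cast
    ring
  · exact h.near_fifth

end MarkoffApprox

/-- The integer `n` is, up to a multiplier, congruent to `8` modulo `A`. -/
def EightMod (A n : ℤ) : Prop := ∃ q, A ∣ q * n - 8

namespace EightMod

variable {A n : ℤ}

lemma add_mul (hn : EightMod A n) (m : ℤ) : EightMod A (n + A * m) := by
  obtain ⟨q, r, hr⟩ := hn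
  exact ⟨q, r + q * m, by linear_combination hr⟩

lemma unit_mul {σ : ℤ} (hσ : |σ| = 1) (hn : EightMod A n) (m : ℕ) : EightMod A (σ ^ m * n) := by
  obtain ⟨q, r, hr⟩ := hn
  have h2 : σ ^ 2 = 1 := by rw [← sq_abs, hσ, one_pow]
  have h3 : σ ^ m * σ ^ m = 1 := by rw [← mul_pow, ← sq, h2, one_pow]
  exact ⟨q * σ ^ m, r, by linear_combination hr + q * n * h3⟩

lemma of_zmod {q : ℤ} (h : (q : ZMod A.natAbs) * n = 8) : EightMod A n := by
  refine ⟨q, ?_⟩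
  rw [← Int.natAbs_dvd, ← ZMod.intCast_zmod_eq_zero_iff_dvd]
  push_cast
  rw [h, sub_self]

end EightMod

namespace MarkoffTriple

variable {a b c : ℕ → ℤ}

lemma eightMod_near (h : MarkoffTriple a b c) (k : ℕ) :
    EightMod (a (k + 1)) (near3' b c k) ∧ EightMod (a (k + 1)) (near3 a b c k) ∧
      EightMod (a (k + 1)) (near4 a b c k) ∧ EightMod (a (k + 1)) (near5 a b c k) := by
  have h0 : (a (k + 1) : ZMod (a (k + 1)).natAbs) = 0 := by
    rw [ZMod.intCast_zmod_eq_zero_iff_dvd, Int.natAbs_dvd]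
  obtain ⟨h1, h2, h3, h4⟩ := near_of_eq_zero (h.map (Int.castRingHom (ZMod (a (k + 1)).natAbs))) h0
  have e2 := neg_one_pow_mul_self (R := ZMod (a (k + 1)).natAbs) k
  refine ⟨.of_zmod (q := 4 * (b (k + 1) * a k)) ?_, .of_zmod (q := -4 * (-1) ^ k * a k) ?_,
    .of_zmod (q := 2 * a (k + 2)) ?_, .of_zmod (q := (-1) ^ k * a k) ?_⟩
  · simp only [near3', eq_intCast] at h1 ⊢
    push_cast
    linear_combination 4 * h1
  · simp only [near3, eq_intCast] at h2 ⊢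
    push_cast
    linear_combination -4 * (-1) ^ k * h2 + 8 * e2
  · simp only [near4, eq_intCast] at h3 ⊢
    push_cast
    linear_combination 2 * h3
  · simp only [near5, eq_intCast] at h4 ⊢
    push_cast
    linear_combination (-1) ^ k * h4 + 8 * e2

end MarkoffTriple

namespace MarkoffApprox

open MarkoffTriple

variable {ξ : ℝ} {a b c : ℕ → ℤ} {X f : ℕ → ℝ} {s : ℝ}

lemma order_pow (h : MarkoffApprox ξ a b c X) (hf : HasOrder X f s) (l : ℕ) :
    HasOrder X (fun k => f k ^ l) (l * s) := by
  induction l with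
  | zero => simpa using h.order_const 1
  | succ l ih =>
    convert h.order_mul ih hf using 1
    · ext k
      ring
    · push_cast
      ring

lemma exists_near_iterate (h : MarkoffApprox ξ a b c X) {i l p t : ℕ} {σ : ℤ} {near : ℕ → ℤ}
    (hp : 1 ≤ p) (hσ : |σ| = 1)
    (hE : NearInt X (fun k => a (k + p + 1) * ξ ^ i - σ * (a (k + 1) * ξ ^ i)) (-gold))
    (hnear : HasOrder X (fun k => a (k + 1) ^ l * (a (k + t + 1) * ξ ^ i) - near k) (gold * s))
    (height : ∀ k, EightMod (a (k + 1)) (near k)) (hl : 1 ≤ l)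
    (hs : l * gold - gold ^ t * gold ≤ gold * s) :
    ∃ C, 0 < C ∧ ∀ k m, ∃ n : ℤ, EightMod (a (k + 1)) n ∧
      |a (k + 1) ^ l * (a (k + p * m + t + 1) * ξ ^ i) - n| ≤ C * X (k + 1) ^ s := by
  obtain ⟨C, hC, hit⟩ := h.near_iterate (E := fun k => a (k + 1) * ξ ^ i) hp hσ
    (by linarith [lt_gold]) hE
  have herr : HasOrder X (fun k => (a (k + 1) : ℝ) ^ l * X (k + t) ^ (-gold)) (gold * s) :=
    h.order_mono (h.order_mul (h.order_pow (h.order_a 1) l)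
      (h.order_shift (h.order_X (-gold)) t)) (by linarith)
  obtain ⟨D, hD, herr⟩ := h.order_unshift herr
  obtain ⟨F, hF, hnear⟩ := h.order_unshift hnear
  refine ⟨C * D + F, by positivity, fun k m => ?_⟩
  obtain ⟨n, hn⟩ := hit m (k + t)
  have hA : a (k + 1) ^ l = a (k + 1) * a (k + 1) ^ (l - 1) := by
    rw [← pow_succ', Nat.sub_add_cancel hl]
  refine ⟨σ ^ m * near k + a (k + 1) * (a (k + 1) ^ (l - 1) * n),
    ((height k).unit_mul hσ m).add_mul _, ?_⟩
  rw [← mul_assoc (a (k + 1)), ← hA]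
  have hσ' : |(σ : ℝ)| = 1 := by exact_mod_cast hσ
  have hX := h.pos (k + t)
  have hidx : k + p * m + t = k + t + p * m := by ring
  calc _ = |a (k + 1) ^ l * (a (k + t + p * m + 1) * ξ ^ i - σ ^ m * (a (k + t + 1) * ξ ^ i) - n) +
        σ ^ m * (a (k + 1) ^ l * (a (k + t + 1) * ξ ^ i) - near k)| := by
        rw [hidx]; push_cast; ring_nf
    _ ≤ |(a (k + 1) : ℝ) ^ l| * (C * X (k + t) ^ (-gold)) + F * X (k + 1) ^ s := by
      refine (abs_add_le _ _).trans (add_le_add ?_ ?_)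
      · rw [abs_mul]
        gcongr
      · rw [abs_mul, abs_pow, hσ', one_pow, one_mul]
        exact hnear k
    _ = C * |(a (k + 1) : ℝ) ^ l * X (k + t) ^ (-gold)| + F * X (k + 1) ^ s := by
      rw [abs_mul, abs_of_pos (by positivity : 0 < X (k + t) ^ (-gold))]; ring
    _ ≤ C * (D * X (k + 1) ^ s) + F * X (k + 1) ^ s := by
      gcongr
      exact herr k
    _ = _ := by ring

/-- Integers close to multiples of `a (k + 6 * m + 5) * ξ ^ i`, with control modulo
`a (k + 1)`. -/
lemma exists_near_six (h : MarkoffApprox ξ a b c X) {i : ℕ} (hi : i ∈ Finset.Icc 3 5) :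
    ∃ C, 0 < C ∧ ∀ k m, ∃ n : ℤ, EightMod (a (k + 1)) n ∧
      |a (k + 1) ^ (i - 2) * (a (k + 6 * m + 5) * ξ ^ i) - n| ≤
        C * X (k + 1) ^ ((i : ℝ) - 4 - gold) := by
  have g2 := gold_sq
  have g3 := gold_pow_three
  have g4 := gold_pow_four
  have l1 := lt_gold
  have hn : NearInt X (fun k => a (k + 6 + 1) * ξ ^ i - (1 : ℤ) * (a (k + 1) * ξ ^ i)) (-gold) :=
    (h.near_six hi).congr fun k => by simp
  fin_cases hi
  · refine h.exists_near_iterate (t := 4) (by norm_num) abs_one hn (near := near3 a b c) ?_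
      (fun k => (h.triple.eightMod_near k).2.1) le_rfl (by push_cast; nlinarith)
    convert h.order_near3 using 1
    · simp
    · push_cast; linarith
  · refine h.exists_near_iterate (t := 4) (by norm_num) abs_one hn (near := near4 a b c) ?_
      (fun k => (h.triple.eightMod_near k).2.2.1) (by norm_num) (by push_cast; nlinarith)
    convert h.order_near4 using 1
    push_cast; linarith
  · refine h.exists_near_iterate (t := 4) (by norm_num) abs_one hn (near := near5 a b c) ?_
      (fun k => (h.triple.eightMod_near k).2.2.2) (by norm_num) (by push_cast; nlinarith)
    convert h.order_near5 using 1
    push_cast; linarith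

lemma exists_near_three (h : MarkoffApprox ξ a b c X) :
    ∃ C, 0 < C ∧ ∀ k m, ∀ t ∈ ({2, 4} : Set ℕ), ∃ n : ℤ, EightMod (a (k + 1)) n ∧
      |a (k + 1) * (a (k + 3 * m + t + 1) * ξ ^ 3) - n| ≤ C * X (k + 1) ^ (-gold) := by
  have g2 := gold_sq
  have g3 := gold_pow_three
  have g4 := gold_pow_four
  have l1 := lt_gold
  have hn : NearInt X (fun k => a (k + 3 + 1) * ξ ^ 3 - (-1 : ℤ) * (a (k + 1) * ξ ^ 3)) (-gold) :=
    h.near_cube.congr fun k => by push_cast; ring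
  obtain ⟨C, hC, h1⟩ := h.exists_near_iterate (l := 1) (t := 2) (s := -gold) (by norm_num)
    (by norm_num) hn (near := near3' b c)
    (h.order_mono (by simpa using h.order_near3') (by linarith))
    (fun k => (h.triple.eightMod_near k).1) le_rfl (by push_cast; nlinarith)
  obtain ⟨D, hD, h2⟩ := h.exists_near_iterate (l := 1) (t := 4) (s := -gold) (by norm_num)
    (by norm_num) hn (near := near3 a b c)
    (h.order_mono (by simpa using h.order_near3) (by linarith))
    (fun k => (h.triple.eightMod_near k).2.1) le_rfl (by push_cast; nlinarith)
  refine ⟨C + D, by positivity, fun k m t ht => ?_⟩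
  have hX : 0 < X (k + 1) ^ (-gold) := by have := h.pos (k + 1); positivity
  rcases ht with rfl | rfl
  · obtain ⟨n, hn8, hn⟩ := h1 k m
    refine ⟨n, hn8, ?_⟩
    rw [pow_one] at hn
    nlinarith
  · obtain ⟨n, hn8, hn⟩ := h2 k m
    refine ⟨n, hn8, ?_⟩
    rw [pow_one] at hn
    nlinarith

end MarkoffApprox

lemma abs_sum_sub_ge {d : ℕ} (hd : 3 ≤ d) {A : ℤ} {f δ : ℕ → ℝ} {r n : ℕ → ℤ} (hA : A ≠ 0)
    (hn : ∀ i ∈ Finset.Icc 3 d, |A ^ (i - 2) * f i - n i| ≤ δ i) (h8 : EightMod A (n d))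
    (hr : r d ≠ 0) (hrA : 8 * |r d| < |A|)
    (hδ : ∑ i ∈ Finset.Icc 3 d, |(r i : ℝ)| * |(A : ℝ)| ^ (d - i) * δ i ≤ 1 / 2) (N : ℤ) :
    1 / (2 * |(A : ℝ)| ^ (d - 2)) ≤ |∑ i ∈ Finset.Icc 3 d, r i * f i - N| := by
  set M : ℤ := ∑ i ∈ Finset.Icc 3 d, r i * A ^ (d - i) * n i - A ^ (d - 2) * N with hM
  have hM0 : M ≠ 0 := by
    intro h0
    obtain ⟨q, hq⟩ := h8
    have h1 : A ∣ M - r d * n d := by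
      have h2 : ∑ i ∈ Finset.Icc 3 d, r i * A ^ (d - i) * n i =
          ∑ i ∈ Finset.Ico 3 d, r i * A ^ (d - i) * n i + r d * n d := by
        rw [← Finset.Ico_insert_right hd, Finset.sum_insert (by simp)]
        simp [add_comm]
      rw [hM, h2, show ∀ x y z : ℤ, x + y - z - y = x - z by intros; ring]
      refine dvd_sub (Finset.dvd_sum fun i hi => ?_) ((dvd_pow_self A (by omega)).mul_right _)
      have := Finset.mem_Ico.1 hi
      exact ((dvd_pow_self A (by omega)).mul_left _).mul_right _
    have h2 : A ∣ 8 * r d := by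
      rw [h0] at h1
      have h3 := (h1.mul_left q).add (hq.mul_left (r d))
      rw [← dvd_neg]
      convert h3 using 1
      ring
    have h3 := Int.eq_zero_of_abs_lt_dvd ((abs_dvd A _).2 h2) (by rw [abs_mul]; simpa using hrA)
    exact hr (by simpa using h3)
  have hA' : 0 < |(A : ℝ)| := by simpa using hA
  have hM1 : (1 : ℝ) ≤ |(M : ℝ)| := by exact_mod_cast Int.one_le_abs hM0
  have hdiff : |(A : ℝ) ^ (d - 2) * (∑ i ∈ Finset.Icc 3 d, r i * f i - N) - M| ≤ 1 / 2 := by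
    have h1 : (A : ℝ) ^ (d - 2) * (∑ i ∈ Finset.Icc 3 d, r i * f i - N) - M =
        ∑ i ∈ Finset.Icc 3 d, r i * A ^ (d - i) * (A ^ (i - 2) * f i - n i) := by
      rw [hM]
      push_cast
      rw [mul_sub, Finset.mul_sum, show ∀ x y z : ℝ, x - y - (z - y) = x - z by intros; ring,
        ← Finset.sum_sub_distrib]
      refine Finset.sum_congr rfl fun i hi => ?_
      have := Finset.mem_Icc.1 hi
      rw [show d - 2 = (d - i) + (i - 2) by omega, pow_add]
      ring
    rw [h1]
    refine (Finset.abs_sum_le_sum_abs _ _).trans (le_trans (Finset.sum_le_sum fun i hi => ?_) hδ)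
    rw [abs_mul, abs_mul, abs_pow]
    gcongr
    exact hn i hi
  rw [div_le_iff₀ (by positivity)]
  have h2 := abs_sub_abs_le_abs_sub (M : ℝ) (A ^ (d - 2) * (∑ i ∈ Finset.Icc 3 d, r i * f i - N))
  rw [abs_sub_comm, abs_mul, abs_pow] at h2
  linarith

namespace MarkoffApprox

variable {ξ : ℝ} {a b c : ℕ → ℤ} {X : ℕ → ℝ}

lemma int_a_ne_zero (h : MarkoffApprox ξ a b c X) (k : ℕ) : a k ≠ 0 := by
  exact_mod_cast h.a_ne_zero k

lemma eight_mul_lt (h : MarkoffApprox ξ a b c X) {k : ℕ} {r : ℤ} {H : ℝ} (hr : r ≠ 0)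
    (hrH : |(r : ℝ)| ≤ H) (hH : 9 * (1 + ξ ^ 2) * H ≤ X k) : 8 * |r| < |a k| := by
  have h1 : (1 : ℝ) ≤ |(r : ℝ)| := by exact_mod_cast Int.one_le_abs hr
  have h2 := h.le_abs_a k
  have h3 : 9 * H ≤ |(a k : ℝ)| := by
    have : 0 < 1 + ξ ^ 2 := by positivity
    refine le_of_mul_le_mul_left ?_ this
    linarith
  have h4 : 8 * |(r : ℝ)| < |(a k : ℝ)| := by linarith
  exact_mod_cast h4

/-- A lower bound for the distance to the integers of the combinations of
`a k * ξ ^ i`, `3 ≤ i ≤ d`. -/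
lemma dist_six (h : MarkoffApprox ξ a b c X) {d : ℕ} (hd : d ∈ Finset.Icc 3 5) :
    ∃ C, 1 ≤ C ∧ ∀ k m, ∀ r : ℕ → ℤ, ∀ H : ℝ, (∀ i, |(r i : ℝ)| ≤ H) → r d ≠ 0 →
      C * H ≤ X (k + 1) → C * H ≤ X (k + 1) ^ (4 + gold - d) → ∀ N : ℤ,
      1 / (2 * X (k + 1) ^ (d - 2)) ≤
        |∑ i ∈ Finset.Icc 3 d, r i * (a (k + 6 * m + 5) * ξ ^ i) - N| := by
  obtain ⟨hd3, hd5⟩ := Finset.mem_Icc.1 hd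
  choose! D hD hnear using fun i (hi : i ∈ Finset.Icc 3 5) => h.exists_near_six hi
  set E := ∑ i ∈ Finset.Icc 3 5, D i with hE
  have hDE : ∀ i ∈ Finset.Icc 3 5, D i ≤ E := fun i hi =>
    Finset.single_le_sum (fun j hj => (hD j hj).le) hi
  have hE0 : 0 < E := (hD d hd).trans_le (hDE d hd)
  refine ⟨9 * (1 + ξ ^ 2) + 6 * E, by nlinarith [sq_nonneg ξ],
    fun k m r H hr hrd hH1 hH2 N => ?_⟩
  have hH0 : 0 ≤ H := (abs_nonneg _).trans (hr 0)
  have hX := h.pos (k + 1)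
  have hAX := h.abs_a_le (k + 1)
  have hA0 : 0 < |(a (k + 1) : ℝ)| := abs_pos.2 (h.a_ne_zero _)
  have hsub : ∀ i ∈ Finset.Icc 3 d, i ∈ Finset.Icc 3 5 := fun i hi => by
    simp only [Finset.mem_Icc] at *; omega
  choose! n hn8 hn using fun i (hi : i ∈ Finset.Icc 3 5) => hnear i hi k m
  have key := abs_sum_sub_ge hd3 (A := a (k + 1)) (f := fun i => a (k + 6 * m + 5) * ξ ^ i)
    (δ := fun i => E * X (k + 1) ^ ((i : ℝ) - 4 - gold)) (r := r) (n := n) (h.int_a_ne_zero _)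
    (fun i hi => (hn i (hsub i hi)).trans (by gcongr; exact hDE i (hsub i hi))) (hn8 d hd) hrd
    (h.eight_mul_lt hrd (hr d) (le_trans (by nlinarith) hH1)) ?_ N
  · refine le_trans ?_ key
    gcongr
  · have hterm : ∀ i ∈ Finset.Icc 3 d, |(r i : ℝ)| * |(a (k + 1) : ℝ)| ^ (d - i) *
        (E * X (k + 1) ^ ((i : ℝ) - 4 - gold)) ≤ 1 / 6 := by
      intro i hi
      have hid := (Finset.mem_Icc.1 hi).2
      calc _ ≤ H * X (k + 1) ^ (d - i) * (E * X (k + 1) ^ ((i : ℝ) - 4 - gold)) := by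
            gcongr
            exact hr i
        _ = (E * H) * X (k + 1) ^ (-(4 + gold - d)) := by
          rw [← Real.rpow_natCast, Nat.cast_sub hid, show -(4 + gold - (d : ℝ)) =
            ((d : ℝ) - i) + ((i : ℝ) - 4 - gold) by ring, Real.rpow_add hX]
          ring
        _ ≤ _ := by
          have hY : 0 < X (k + 1) ^ (4 + gold - d) := by positivity
          rw [Real.rpow_neg hX.le, ← div_eq_mul_inv, div_le_iff₀ hY]
          nlinarith [mul_nonneg (by positivity : 0 ≤ 9 * (1 + ξ ^ 2)) hH0]
    refine (Finset.sum_le_sum hterm).trans ?_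
    rw [Finset.sum_const, Nat.card_Icc, nsmul_eq_mul]
    have : ((d + 1 - 3 : ℕ) : ℝ) ≤ 3 := by exact_mod_cast (by omega : d + 1 - 3 ≤ 3)
    linarith

lemma dist_three (h : MarkoffApprox ξ a b c X) :
    ∃ C, 1 ≤ C ∧ ∀ k m, ∀ t ∈ ({2, 4} : Set ℕ), ∀ r : ℤ, ∀ H : ℝ, |(r : ℝ)| ≤ H → r ≠ 0 →
      C * H ≤ X (k + 1) → ∀ N : ℤ,
      1 / (2 * X (k + 1)) ≤ |r * (a (k + 3 * m + t + 1) * ξ ^ 3) - N| := by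
  obtain ⟨D, hD, hnear⟩ := h.exists_near_three
  refine ⟨9 * (1 + ξ ^ 2) + 2 * D, by nlinarith [sq_nonneg ξ],
    fun k m t ht r H hr hr0 hH N => ?_⟩
  obtain ⟨n, hn8, hn⟩ := hnear k m t ht
  have hX := h.pos (k + 1)
  have hAX := h.abs_a_le (k + 1)
  have hA0 : 0 < |(a (k + 1) : ℝ)| := abs_pos.2 (h.a_ne_zero _)
  have hH0 : 0 ≤ H := (abs_nonneg _).trans hr
  have key := abs_sum_sub_ge le_rfl (A := a (k + 1))
    (f := fun i => a (k + 3 * m + t + 1) * ξ ^ 3) (δ := fun i => D * X (k + 1) ^ (-gold))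
    (r := fun _ => r) (n := fun _ => n) (h.int_a_ne_zero _) (fun i hi => ?_) hn8 hr0
    (h.eight_mul_lt hr0 hr (le_trans (by nlinarith) hH)) ?_ N
  · rw [Finset.Icc_self, Finset.sum_singleton] at key
    refine le_trans ?_ key
    rw [pow_one]
    gcongr
  · rw [Finset.Icc_self, Finset.mem_singleton] at hi
    subst hi
    simpa using hn
  · rw [Finset.Icc_self, Finset.sum_singleton, Nat.sub_self, pow_zero, mul_one]
    have h1 : X (k + 1) ^ (-gold) ≤ (X (k + 1))⁻¹ := by
      rw [← Real.rpow_neg_one]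
      exact Real.rpow_le_rpow_of_exponent_le (h.one_le _) (by linarith [lt_gold])
    calc _ ≤ H * (D * (X (k + 1))⁻¹) := by gcongr
      _ ≤ 1 / 2 := by
        rw [← mul_assoc, ← div_eq_mul_inv, div_le_iff₀ hX]
        nlinarith [mul_nonneg (by positivity : 0 ≤ 9 * (1 + ξ ^ 2)) hH0]

end MarkoffApprox

namespace MarkoffApprox

variable {ξ : ℝ} {a b c : ℕ → ℤ} {X : ℕ → ℝ}

lemma natCast_le (h : MarkoffApprox ξ a b c X) (k : ℕ) : (k : ℝ) ≤ X k := by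
  induction k with
  | zero => simpa using (h.pos 0).le
  | succ k ih =>
    push_cast
    linarith [h.two_mul_le k, h.one_le k]

/-- The first index from `i` on at which `X` reaches `B`. -/
lemma exists_first (h : MarkoffApprox ξ a b c X) (i : ℕ) (B : ℝ) :
    ∃ k, i ≤ k ∧ B ≤ X k ∧ (k = i ∨ ∃ l, i ≤ l ∧ k = l + 1 ∧ X l < B) := by
  classical
  have hex : ∃ n, B ≤ X (i + n) := by
    obtain ⟨n, hn⟩ := exists_nat_ge B
    exact ⟨n, hn.trans ((h.natCast_le n).trans (h.mono (by omega)))⟩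
  refine ⟨i + Nat.find hex, by omega, Nat.find_spec hex, ?_⟩
  rcases Nat.eq_zero_or_pos (Nat.find hex) with h0 | h0
  · exact Or.inl (by omega)
  · refine Or.inr ⟨i + (Nat.find hex - 1), by omega, by omega, ?_⟩
    exact not_le.1 (Nat.find_min hex (Nat.sub_lt h0 one_pos))

lemma exists_le_rpow (h : MarkoffApprox ξ a b c X) (n : ℕ) :
    ∃ C, 1 ≤ C ∧ ∀ k, X (k + n) ≤ C * X k ^ (gold ^ n) := by
  obtain ⟨C, hC, hg⟩ := h.order_shift (h.order_X 1) n
  refine ⟨max C 1, le_max_right _ _, fun k => ?_⟩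
  have h1 := h.pos k
  have := hg k
  simp only [Real.rpow_one, mul_one] at this
  refine (le_abs_self _).trans (this.trans ?_)
  gcongr
  exact le_max_left _ _

/-- The first index `j ≥ 1` at which `X` reaches `(C * H) ^ μ`. -/
lemma exists_start (h : MarkoffApprox ξ a b c X) {C μ : ℝ} (hC : 1 ≤ C) (hμ : 0 ≤ μ) :
    ∃ D, 1 ≤ D ∧ ∀ H : ℝ, 1 ≤ H → ∃ j, (C * H) ^ μ ≤ X (j + 1) ∧
      X (j + 1) ≤ D * H ^ (μ * gold) := by
  obtain ⟨E, hE, hg⟩ := h.exists_le_rpow 1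
  have hl := gold_pos
  refine ⟨X 1 + E * (C ^ μ) ^ gold, ?_, fun H hH => ?_⟩
  · have := h.one_le 1
    have : 0 ≤ E * (C ^ μ) ^ gold := by positivity
    linarith
  have hH1 : 1 ≤ H ^ (μ * gold) := Real.one_le_rpow hH (by positivity)
  have h1 := h.pos 1
  have h2 : 0 ≤ E * (C ^ μ) ^ gold := by positivity
  obtain ⟨k, hk, hB, hk'⟩ := h.exists_first 1 ((C * H) ^ μ)
  obtain ⟨j, rfl⟩ := Nat.exists_eq_add_of_le' hk
  refine ⟨j, hB, ?_⟩
  rcases hk' with h0 | ⟨l, hl1, hl2, hl3⟩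
  · rw [h0]
    nlinarith
  · obtain rfl : l = j := by omega
    have h3 := h.pos l
    calc X (l + 1) ≤ E * X l ^ gold := by simpa using hg l
      _ ≤ E * ((C * H) ^ μ) ^ gold := by gcongr
      _ = E * (C ^ μ) ^ gold * H ^ (μ * gold) := by
        rw [Real.mul_rpow (by positivity) (by positivity),
          Real.mul_rpow (by positivity) (by positivity), Real.rpow_mul (by positivity)]
        ring
      _ ≤ _ := by nlinarith

lemma sub_le_mul_abs (h : MarkoffApprox ξ a b c X) :
    ∃ C, 1 ≤ C ∧ ∀ k, ∀ s₀ s₁ s₂ : ℤ, ∀ N V ε : ℝ, |(s₁ : ℝ)| ≤ N → |(s₂ : ℝ)| ≤ N →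
      (∀ n : ℤ, ε ≤ |a k * V - n|) →
      ε - C * N / X k ≤ X k * |s₀ + s₁ * ξ + s₂ * ξ ^ 2 + V| := by
  obtain ⟨C, hC, hdel⟩ := h.order_del 0
  obtain ⟨D, hD, hrho⟩ := h.order_rho 0
  refine ⟨C + D + 1, by linarith, fun k s₀ s₁ s₂ N V ε h1 h2 hε => ?_⟩
  have hX := h.pos k
  have hN : 0 ≤ N := (abs_nonneg _).trans h1
  have hd : |del ξ a b k| ≤ C * (X k)⁻¹ := by simpa [Real.rpow_neg_one] using hdel k
  have hr : |rho ξ a c k| ≤ D * (X k)⁻¹ := by simpa [Real.rpow_neg_one] using hrho k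
  have h3 : a k * V - (-(s₀ * a k + s₁ * b k + s₂ * c k) : ℤ) =
      a k * (s₀ + s₁ * ξ + s₂ * ξ ^ 2 + V) - (s₁ * del ξ a b k + s₂ * rho ξ a c k) := by
    simp only [del, rho]
    push_cast
    ring
  have h4 := hε (-(s₀ * a k + s₁ * b k + s₂ * c k))
  rw [h3] at h4
  have h5 : |s₁ * del ξ a b k + s₂ * rho ξ a c k| ≤ (C + D + 1) * N / X k := by
    calc _ ≤ _ := abs_add_le _ _
      _ ≤ N * (C * (X k)⁻¹) + N * (D * (X k)⁻¹) := by
        rw [abs_mul, abs_mul]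
        gcongr
      _ = (C + D) * N / X k := by ring
      _ ≤ _ := div_le_div_of_nonneg_right (by nlinarith) hX.le
  have h6 : |a k * (s₀ + s₁ * ξ + s₂ * ξ ^ 2 + V)| ≤
      X k * |s₀ + s₁ * ξ + s₂ * ξ ^ 2 + V| := by
    rw [abs_mul]
    gcongr
    exact h.abs_a_le k
  have h7 := abs_sub (a k * (s₀ + s₁ * ξ + s₂ * ξ ^ 2 + V))
    (s₁ * del ξ a b k + s₂ * rho ξ a c k)
  linarith

lemma one_le_of_dist (h : MarkoffApprox ξ a b c X) :
    ∃ C, 1 ≤ C ∧ ∀ k, ∀ s₀ s₁ s₂ : ℤ, ∀ N V Y : ℝ, 0 < Y → |(s₁ : ℝ)| ≤ N → |(s₂ : ℝ)| ≤ N →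
      (∀ n : ℤ, 1 / (2 * Y) ≤ |a k * V - n|) → C * N * Y ≤ X k →
      1 ≤ 4 * (Y * X k) * |s₀ + s₁ * ξ + s₂ * ξ ^ 2 + V| := by
  obtain ⟨C, hC, hS⟩ := h.sub_le_mul_abs
  refine ⟨4 * C, by linarith, fun k s₀ s₁ s₂ N V Y hY h1 h2 hd hk => ?_⟩
  have hX := h.pos k
  have h3 := hS k s₀ s₁ s₂ N V _ h1 h2 hd
  have h4 : C * N / X k ≤ 1 / (4 * Y) := by
    rw [div_le_div_iff₀ hX (by positivity)]
    linarith
  have h5 : 1 / (2 * Y) = 2 * (1 / (4 * Y)) := by field_simp; norm_num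
  have h6 : 1 / (4 * Y) ≤ X k * |s₀ + s₁ * ξ + s₂ * ξ ^ 2 + V| := by linarith
  rw [div_le_iff₀ (by positivity)] at h6
  linarith

end MarkoffApprox

namespace MarkoffApprox

variable {ξ : ℝ} {a b c : ℕ → ℤ} {X : ℕ → ℝ}

lemma lower_bound_six (h : MarkoffApprox ξ a b c X) {d : ℕ} (hd : d ∈ Finset.Icc 3 5) {μ e : ℝ}
    (hμ : 1 ≤ μ) (hμd : 1 ≤ μ * (4 + gold - d)) (he : ((d - 2 : ℕ) + 1 : ℝ) * (μ * gold ^ 6) ≤ e)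
    (he' : gold + (d - 2 : ℕ) * (μ * gold ^ 6) * gold ^ 2 ≤ e) :
    ∃ K, 0 < K ∧ ∀ s₀ s₁ s₂ : ℤ, ∀ r : ℕ → ℤ, ∀ p H : ℝ, 0 ≤ p → 1 ≤ H →
      |(s₁ : ℝ)| ≤ p + H → |(s₂ : ℝ)| ≤ p + H → (∀ i, |(r i : ℝ)| ≤ H) → r d ≠ 0 →
      1 ≤ K * ((1 + p) ^ gold * H ^ e) *
        |s₀ + s₁ * ξ + s₂ * ξ ^ 2 + ∑ i ∈ Finset.Icc 3 d, r i * ξ ^ i| := by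
  have g2 := gold_sq
  have l1 := lt_gold
  have l0 := gold_pos
  have hd5 : (d : ℝ) ≤ 5 := by exact_mod_cast (Finset.mem_Icc.1 hd).2
  obtain ⟨C, hC, hdist⟩ := h.dist_six hd
  obtain ⟨C', hC', hS⟩ := h.one_le_of_dist
  obtain ⟨D, hD, hstart⟩ := h.exists_start hC (zero_le_one.trans hμ)
  obtain ⟨E₁, hE₁, hX1⟩ := h.exists_le_rpow 1
  obtain ⟨E₅, hE₅, hX5⟩ := h.exists_le_rpow 5
  set n := d - 2 with hn
  set F := E₅ * D ^ (gold ^ 5) with hF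
  have hF0 : 0 < F := by positivity
  set K₁ := F ^ (n + 1) with hK₁
  set K₂ := E₁ * (C' * 2) ^ gold * (F ^ n) ^ (gold ^ 2) with hK₂
  have hK₁0 : 0 < K₁ := by positivity
  have hK₂0 : 0 < K₂ := by positivity
  refine ⟨4 * (K₁ + K₂), by positivity, fun s₀ s₁ s₂ r p H hp hH h1 h2 hr hrd => ?_⟩
  obtain ⟨j, hj, hjH⟩ := hstart H hH
  have hH0 : 0 < H := by linarith
  have hx := h.pos (j + 1)
  have hy := h.pos (j + 6)
  have hCH : 1 ≤ C * H := by nlinarith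
  have hCH1 : C * H ≤ X (j + 1) := by
    refine le_trans ?_ hj
    simpa using Real.rpow_le_rpow_of_exponent_le hCH hμ
  have hCH2 : C * H ≤ X (j + 1) ^ (4 + gold - d) := by
    calc C * H ≤ (C * H) ^ (μ * (4 + gold - d)) := by
          simpa using Real.rpow_le_rpow_of_exponent_le hCH hμd
      _ = ((C * H) ^ μ) ^ (4 + gold - d) := Real.rpow_mul (by positivity) _ _
      _ ≤ _ := by
        gcongr
        linarith
  have hyH : X (j + 6) ≤ F * H ^ (μ * gold ^ 6) := by
    calc X (j + 6) ≤ E₅ * X (j + 1) ^ (gold ^ 5) := hX5 (j + 1)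
      _ ≤ E₅ * (D * H ^ (μ * gold)) ^ (gold ^ 5) := by gcongr
      _ = _ := by
        rw [Real.mul_rpow (by positivity) (by positivity), ← Real.rpow_mul hH0.le, hF]
        ring_nf
  set Y := X (j + 6) ^ n with hY
  have hY0 : 0 < Y := by positivity
  have hYH : Y ≤ F ^ n * H ^ (n * (μ * gold ^ 6)) := by
    calc Y ≤ (F * H ^ (μ * gold ^ 6)) ^ n := by rw [hY]; gcongr
      _ = _ := by
        rw [mul_pow, ← Real.rpow_natCast (H ^ _), ← Real.rpow_mul hH0.le, mul_comm (n : ℝ)]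
  obtain ⟨T, hjT, hBT, hT⟩ := h.exists_first (j + 5) (C' * (p + H) * Y)
  have hkey : 1 ≤ 4 * (Y * X T) *
      |s₀ + s₁ * ξ + s₂ * ξ ^ 2 + ∑ i ∈ Finset.Icc 3 d, r i * ξ ^ i| := by
    refine hS T s₀ s₁ s₂ (p + H) _ Y hY0 h1 h2 (fun N => ?_) hBT
    obtain ⟨q, rfl⟩ := Nat.exists_eq_add_of_le hjT
    have hk : X (j + 1) ≤ X (j + q % 6 + 1) := h.mono (by omega)
    have hk' : X (j + q % 6 + 1) ≤ X (j + 6) := h.mono (by omega)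
    have hpos := h.pos (j + q % 6 + 1)
    have := hdist (j + q % 6) (q / 6) r H hr hrd (hCH1.trans hk)
      (hCH2.trans (Real.rpow_le_rpow hx.le hk (by linarith))) N
    rw [show j + q % 6 + 6 * (q / 6) + 5 = j + 5 + q by omega] at this
    rw [Finset.mul_sum, Finset.sum_congr rfl fun i _ => mul_left_comm _ (r i : ℝ) _]
    refine le_trans ?_ this
    rw [hY]
    gcongr
  have hp1 : 1 ≤ (1 + p) ^ gold := Real.one_le_rpow (by linarith) l0.le
  have hHe : 0 < H ^ e := by positivity
  have hYg : Y ^ (gold ^ 2) = Y ^ gold * Y := by rw [g2, Real.rpow_add hY0, Real.rpow_one]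
  have hbound : Y * X T ≤ (K₁ + K₂) * ((1 + p) ^ gold * H ^ e) := by
    rcases hT with rfl | ⟨l, hl, rfl, hlB⟩
    · calc Y * X (j + 5) ≤ Y * X (j + 6) := by
            gcongr
            exact h.mono (by omega)
        _ ≤ (F ^ n * H ^ (n * (μ * gold ^ 6))) * (F * H ^ (μ * gold ^ 6)) := by gcongr
        _ = K₁ * (1 * H ^ ((n + 1) * (μ * gold ^ 6))) := by
          rw [add_mul, one_mul, one_mul, Real.rpow_add hH0, hK₁]; ring
        _ ≤ (K₁ + K₂) * ((1 + p) ^ gold * H ^ e) := by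
          gcongr
          linarith
    · have hpH : p + H ≤ 2 * ((1 + p) * H) := by nlinarith
      have hXl := h.pos l
      calc Y * X (l + 1) ≤ Y * (E₁ * X l ^ gold) := by
            gcongr
            simpa using hX1 l
        _ ≤ Y * (E₁ * (C' * (2 * ((1 + p) * H)) * Y) ^ gold) := by
          gcongr
          exact hlB.le.trans (by gcongr)
        _ = E₁ * (C' * 2) ^ gold * ((1 + p) ^ gold * H ^ gold) * Y ^ (gold ^ 2) := by
          rw [show C' * (2 * ((1 + p) * H)) * Y = (C' * 2) * ((1 + p) * H) * Y by ring,
            Real.mul_rpow (by positivity) hY0.le,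
            Real.mul_rpow (x := C' * 2) (y := (1 + p) * H) (by positivity) (by positivity),
            Real.mul_rpow (x := 1 + p) (by positivity) (by positivity), hYg]
          ring
        _ ≤ E₁ * (C' * 2) ^ gold * ((1 + p) ^ gold * H ^ gold) *
            (F ^ n * H ^ (n * (μ * gold ^ 6))) ^ (gold ^ 2) := by
          gcongr
        _ = K₂ * ((1 + p) ^ gold * H ^ (gold + n * (μ * gold ^ 6) * gold ^ 2)) := by
          rw [Real.mul_rpow (x := F ^ n) (by positivity) (by positivity), ← Real.rpow_mul hH0.le,
            Real.rpow_add hH0, hK₂]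
          ring
        _ ≤ (K₁ + K₂) * ((1 + p) ^ gold * H ^ e) := by
          gcongr
          linarith
  calc 1 ≤ _ := hkey
    _ ≤ 4 * ((K₁ + K₂) * ((1 + p) ^ gold * H ^ e)) *
        |s₀ + s₁ * ξ + s₂ * ξ ^ 2 + ∑ i ∈ Finset.Icc 3 d, r i * ξ ^ i| := by gcongr
    _ = _ := by ring

lemma lower_bound_three (h : MarkoffApprox ξ a b c X) :
    ∃ K, 0 < K ∧ ∀ s₀ s₁ s₂ r : ℤ, ∀ p H : ℝ, 0 ≤ p → 1 ≤ H →
      |(s₁ : ℝ)| ≤ p + H → |(s₂ : ℝ)| ≤ p + H → |(r : ℝ)| ≤ H → r ≠ 0 →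
      1 ≤ K * ((1 + p) ^ gold * H ^ (gold ^ 4)) *
        |s₀ + s₁ * ξ + s₂ * ξ ^ 2 + r * ξ ^ 3| := by
  have g2 := gold_sq
  have g3 := gold_pow_three
  have g4 := gold_pow_four
  have l1 := lt_gold
  have l0 := gold_pos
  obtain ⟨C, hC, hdist⟩ := h.dist_three
  obtain ⟨C', hC', hS⟩ := h.one_le_of_dist
  obtain ⟨D, hD, hstart⟩ := h.exists_start hC zero_le_one
  obtain ⟨E₁, hE₁, hX1⟩ := h.exists_le_rpow 1
  obtain ⟨E₂, hE₂, hX2⟩ := h.exists_le_rpow 2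
  obtain ⟨G, hG, hgrow⟩ := h.growth
  set F := E₁ * D ^ gold with hF
  have hF0 : 0 < F := by positivity
  set K₁ := E₁ * F ^ (gold ^ 2) with hK₁
  set K₂ := E₁ * (C' * 2) ^ gold * F ^ (gold ^ 2) with hK₂
  set K₃ := E₂ * (2 * G * C') ^ (gold ^ 4) with hK₃
  have hK₁0 : 0 < K₁ := by positivity
  have hK₂0 : 0 < K₂ := by positivity
  have hK₃0 : 0 < K₃ := by positivity
  refine ⟨4 * (K₁ + K₂ + K₃), by positivity, fun s₀ s₁ s₂ r p H hp hH h1 h2 hr hr0 => ?_⟩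
  obtain ⟨j, hj, hjH⟩ := hstart H hH
  rw [Real.rpow_one] at hj
  have hH0 : 0 < H := by linarith
  have hx := h.pos (j + 1)
  set Y := X (j + 2) with hY
  have hY0 : 0 < Y := h.pos _
  have hYH : Y ≤ F * H ^ (gold ^ 2) := by
    calc Y ≤ E₁ * X (j + 1) ^ gold := by simpa using hX1 (j + 1)
      _ ≤ E₁ * (D * H ^ (1 * gold)) ^ gold := by gcongr
      _ = _ := by
        rw [Real.mul_rpow (by positivity) (by positivity), ← Real.rpow_mul hH0.le, hF]
        ring_nf
  have hYpow : Y ^ (gold ^ 2) ≤ F ^ (gold ^ 2) * H ^ (gold ^ 4) := by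
    calc Y ^ (gold ^ 2) ≤ (F * H ^ (gold ^ 2)) ^ (gold ^ 2) := by gcongr
      _ = _ := by
        rw [Real.mul_rpow (by positivity) (by positivity), ← Real.rpow_mul hH0.le]
        ring_nf
  obtain ⟨T, hjT, hBT, hT⟩ := h.exists_first (j + 3) (C' * (p + H) * Y)
  have hkey : 1 ≤ 4 * (Y * X T) * |s₀ + s₁ * ξ + s₂ * ξ ^ 2 + r * ξ ^ 3| := by
    refine hS T s₀ s₁ s₂ (p + H) _ Y hY0 h1 h2 (fun N => ?_) hBT
    have hcover : ∃ k m t, j ≤ k ∧ k ≤ j + 1 ∧ t ∈ ({2, 4} : Set ℕ) ∧ T = k + 3 * m + t + 1 := by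
      obtain ⟨q, rfl⟩ := Nat.exists_eq_add_of_le hjT
      have : q % 3 = 0 ∨ q % 3 = 1 ∨ q % 3 = 2 := by omega
      rcases this with h0 | h0 | h0
      · exact ⟨j, q / 3, 2, by omega, by omega, by simp, by omega⟩
      · exact ⟨j + 1, q / 3, 2, by omega, by omega, by simp, by omega⟩
      · exact ⟨j, q / 3, 4, by omega, by omega, by simp, by omega⟩
    obtain ⟨k, m, t, hk1, hk2, ht, rfl⟩ := hcover
    have hk : X (j + 1) ≤ X (k + 1) := h.mono (by omega)
    have hk' : X (k + 1) ≤ Y := h.mono (by omega)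
    have hpos := h.pos (k + 1)
    have := hdist k m t ht r H hr hr0 (hj.trans hk) N
    rw [mul_left_comm]
    refine le_trans ?_ this
    gcongr
  have hp1 : 1 ≤ (1 + p) ^ gold := Real.one_le_rpow (by linarith) l0.le
  have hHe : 0 < H ^ (gold ^ 4) := by positivity
  have hbound : Y * X T ≤ (K₁ + K₂ + K₃) * ((1 + p) ^ gold * H ^ (gold ^ 4)) := by
    rcases hT with rfl | ⟨l, hl, rfl, hlB⟩
    · calc Y * X (j + 3) ≤ Y * (E₁ * Y ^ gold) := by
            gcongr
            simpa using hX1 (j + 2)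
        _ = E₁ * Y ^ (gold ^ 2) := by rw [g2, Real.rpow_add hY0, Real.rpow_one]; ring
        _ ≤ E₁ * (F ^ (gold ^ 2) * H ^ (gold ^ 4)) := by gcongr
        _ = K₁ * (1 * H ^ (gold ^ 4)) := by rw [hK₁]; ring
        _ ≤ (K₁ + K₂ + K₃) * ((1 + p) ^ gold * H ^ (gold ^ 4)) := by
          gcongr
          linarith
    · have hXl := h.pos l
      rcases le_total H p with hpH | hpH
      · calc Y * X (l + 1) ≤ Y * (E₁ * X l ^ gold) := by
              gcongr
              simpa using hX1 l
          _ ≤ Y * (E₁ * (C' * (2 * (1 + p)) * Y) ^ gold) := by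
            gcongr
            refine hlB.le.trans ?_
            gcongr
            linarith
          _ = E₁ * (C' * 2) ^ gold * (1 + p) ^ gold * Y ^ (gold ^ 2) := by
            rw [show C' * (2 * (1 + p)) * Y = (C' * 2) * (1 + p) * Y by ring,
              Real.mul_rpow (by positivity) hY0.le,
              Real.mul_rpow (x := C' * 2) (y := 1 + p) (by positivity) (by positivity), g2,
              Real.rpow_add hY0, Real.rpow_one]
            ring
          _ ≤ E₁ * (C' * 2) ^ gold * (1 + p) ^ gold * (F ^ (gold ^ 2) * H ^ (gold ^ 4)) := by
            gcongr
          _ = K₂ * ((1 + p) ^ gold * H ^ (gold ^ 4)) := by rw [hK₂]; ring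
          _ ≤ (K₁ + K₂ + K₃) * ((1 + p) ^ gold * H ^ (gold ^ 4)) := by
            gcongr
            linarith
      · obtain ⟨i, rfl⟩ : ∃ i, l = i + 1 := ⟨l - 1, by omega⟩
        have hZ := h.pos i
        have hYZ : Y ≤ X i := h.mono (by omega)
        have hZH : X i ^ (gold - 1) ≤ 2 * G * C' * H := by
          rw [Real.rpow_sub hZ, Real.rpow_one, div_le_iff₀ hZ]
          calc X i ^ gold ≤ G * X (i + 1) := (hgrow i).2
            _ ≤ G * (C' * (2 * H) * X i) := by
              gcongr
              refine hlB.le.trans ?_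
              gcongr
              linarith
            _ = _ := by ring
        calc Y * X (i + 1 + 1) ≤ X i * (E₂ * X i ^ (gold ^ 2)) := by
              gcongr
              · exact (h.pos _).le
              · exact hX2 i
          _ = E₂ * X i ^ (1 + gold ^ 2) := by rw [Real.rpow_add hZ, Real.rpow_one]; ring
          _ ≤ E₂ * X i ^ ((gold - 1) * gold ^ 4) := by
            gcongr
            · exact h.one_le i
            · nlinarith
          _ = E₂ * (X i ^ (gold - 1)) ^ (gold ^ 4) := by rw [Real.rpow_mul hZ.le]
          _ ≤ E₂ * (2 * G * C' * H) ^ (gold ^ 4) := by gcongr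
          _ = K₃ * (1 * H ^ (gold ^ 4)) := by
            rw [Real.mul_rpow (by positivity) hH0.le, hK₃]
            ring
          _ ≤ (K₁ + K₂ + K₃) * ((1 + p) ^ gold * H ^ (gold ^ 4)) := by
            gcongr
            linarith
  calc 1 ≤ _ := hkey
    _ ≤ 4 * ((K₁ + K₂ + K₃) * ((1 + p) ^ gold * H ^ (gold ^ 4))) *
        |s₀ + s₁ * ξ + s₂ * ξ ^ 2 + r * ξ ^ 3| := by gcongr
    _ = _ := by ring

end MarkoffApprox

lemma abs_intCast_le_Xnorm (x : ℕ → Matrix (Fin 2) (Fin 2) ℤ) (k : ℕ) :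
    |(x k 0 0 : ℝ)| ≤ Xnorm x k ∧ |(x k 0 1 : ℝ)| ≤ Xnorm x k ∧ |(x k 1 1 : ℝ)| ≤ Xnorm x k := by
  simp [Xnorm]

lemma exists_nat_eq_Xnorm (x : ℕ → Matrix (Fin 2) (Fin 2) ℤ) (k : ℕ) :
    ∃ m : ℕ, (m : ℝ) = Xnorm x k :=
  ⟨max (x k 0 0).natAbs (max (x k 0 1).natAbs (x k 1 1).natAbs), by
    simp [Xnorm, Nat.cast_natAbs]⟩

lemma natCast_le_of_succ_lt {u : ℕ → ℝ} (hnat : ∀ k, ∃ m : ℕ, (m : ℝ) = u k)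
    (hlt : ∀ k, 1 ≤ k → u k < u (k + 1)) (k : ℕ) (hk : 1 ≤ k) : (k : ℝ) - 1 ≤ u k := by
  choose m hm using hnat
  induction k, hk using Nat.le_induction with
  | base => simp [← hm]
  | succ k hk ih =>
    have h := hlt k hk
    rw [← hm, ← hm] at h
    rw [← hm] at ih ⊢
    have h' : (m k : ℝ) + 1 ≤ m (k + 1) := by exact_mod_cast h
    push_cast
    linarith

lemma MarkoffSeq.markoffTriple {ξ : ℝ} {x : ℕ → Matrix (Fin 2) (Fin 2) ℤ}
    (hx : MarkoffSeq ξ x) {m : ℕ} (hm : Even m) (hm1 : 1 ≤ m) :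
    MarkoffTriple (fun k => x (m + k) 0 0) (fun k => x (m + k) 0 1) (fun k => x (m + k) 1 1) := by
  obtain ⟨hsymm, hdet, _, _, _, _, _, _, hk⟩ := hx
  have hshift : ∀ k, 1 ≤ m + k := fun k => hm1.trans (Nat.le_add_right m k)
  have hentry : ∀ k, ∀ i j, x (m + (k + 2)) i j =
      (3 * x (m + (k + 1)) i 0 + (-1) ^ k * x (m + (k + 1)) i 1) * x (m + k) 0 j
        - (-1) ^ k * x (m + (k + 1)) i 0 * x (m + k) 1 j := by
    intro k i j
    have hp : (-1 : ℤ) ^ (m + k) = (-1) ^ k := by rw [pow_add, hm.neg_one_pow, one_mul]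
    have h := (hk _ (hshift k)).2.2.1.1
    simp only [add_assoc] at h
    rw [h]
    simp only [Mmat, Matrix.mul_apply, Fin.sum_univ_two, ← add_assoc, pow_succ, hp]
    simp
    ring
  refine ⟨fun k => ?_, fun k => ?_, fun k => ?_, fun k => ?_, fun k => ?_⟩
  · have h := hdet _ (hshift k)
    rw [Matrix.det_fin_two, ← hsymm _ (hshift k)] at h
    linarith
  · rw [hentry, hsymm _ (hshift k)]
  · rw [hentry]
  · rw [hsymm _ (hshift (k + 2)), hentry, ← hsymm _ (hshift (k + 1)), ← hsymm _ (hshift k)]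
  · rw [hentry, ← hsymm _ (hshift (k + 1))]

/-- A Markoff sequence, after discarding an even number of initial matrices, satisfies the
quantitative hypotheses of `MarkoffApprox`. -/
lemma MarkoffSeq.exists_markoffApprox {ξ : ℝ} {x : ℕ → Matrix (Fin 2) (Fin 2) ℤ}
    (hx : MarkoffSeq ξ x) :
    ∃ (a b c : ℕ → ℤ) (X : ℕ → ℝ), MarkoffApprox ξ a b c X := by
  obtain ⟨-, -, c₁, c₂, c₃, hc₁, hc₂, hc₃, hk⟩ := id hx
  have l1 := lt_gold
  have hone : ∀ k, 1 ≤ k → 1 ≤ Xnorm x k := by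
    intro k h1
    have h := (hk k h1).2.2.2.2
    have ha := (abs_intCast_le_Xnorm x k).1
    have h0 : x k 0 0 ≠ 0 := by
      intro h0
      rw [h0] at h ha
      simp at h ha
      linarith
    have h1 : (1 : ℝ) ≤ |(x k 0 0 : ℝ)| := by exact_mod_cast Int.one_le_abs h0
    linarith
  have htend : Tendsto (fun t : ℝ => c₁ * t ^ (gold - 1)) atTop atTop :=
    (tendsto_rpow_atTop (by linarith)).const_mul_atTop hc₁
  obtain ⟨B, hB⟩ := (htend.eventually_ge_atTop 2).exists_forall_of_atTop
  obtain ⟨n, hn⟩ := exists_nat_ge B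
  have hshift : ∀ k, 1 ≤ 2 * (n + 1) + k := by intro k; omega
  refine ⟨fun k => x (2 * (n + 1) + k) 0 0, fun k => x (2 * (n + 1) + k) 0 1,
    fun k => x (2 * (n + 1) + k) 1 1, fun k => Xnorm x (2 * (n + 1) + k),
    hx.markoffTriple (even_two_mul _) (by omega), fun k => hone _ (hshift k), fun k => ?_,
    ⟨c₂ + c₁⁻¹, by positivity, fun k => ⟨?_, ?_⟩⟩,
    fun k => (abs_intCast_le_Xnorm x _).1, fun k => (abs_intCast_le_Xnorm x _).2.1,
    fun k => (abs_intCast_le_Xnorm x _).2.2, fun k => (hk _ (hshift k)).2.2.2.2.le,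
    c₃, hc₃, fun k => (hk _ (hshift k)).2.1⟩
  · have h1 := hone _ (hshift k)
    have hle := natCast_le_of_succ_lt (exists_nat_eq_Xnorm x) (fun k h => (hk k h).2.2.2.1) _
      (hshift k)
    push_cast at hle
    have hX := hB (Xnorm x (2 * (n + 1) + k)) (by linarith [k.cast_nonneg (α := ℝ)])
    refine le_trans ?_ (hk _ (hshift k)).1.1
    calc 2 * Xnorm x (2 * (n + 1) + k)
        ≤ c₁ * Xnorm x (2 * (n + 1) + k) ^ (gold - 1) * Xnorm x (2 * (n + 1) + k) := by gcongr
      _ = c₁ * Xnorm x (2 * (n + 1) + k) ^ gold := by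
        rw [Real.rpow_sub_one (by linarith)]
        field_simp
  · have h1 := hone _ (hshift k)
    refine ((hk _ (hshift k)).1.2).trans ?_
    gcongr
    linarith [inv_pos.2 hc₁]
  · have h1 := hone _ (hshift (k + 1))
    have hle := (hk _ (hshift k)).1.1
    calc Xnorm x (2 * (n + 1) + k) ^ gold
        = c₁⁻¹ * (c₁ * Xnorm x (2 * (n + 1) + k) ^ gold) := by field_simp
      _ ≤ c₁⁻¹ * Xnorm x (2 * (n + 1) + (k + 1)) := by gcongr; exact hle
      _ ≤ _ := by
        gcongr
        linarith

lemma abs_coeff_le_polyNorm (P : ℤ[X]) (i : ℕ) : |(P.coeff i : ℝ)| ≤ polyNorm P := by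
  by_cases hi : i ∈ P.support
  · have h : (P.coeff i).natAbs ≤ polyNorm P :=
      Finset.le_sup (f := fun i => (P.coeff i).natAbs) hi
    rw [← Int.cast_abs, Int.abs_eq_natAbs]
    exact_mod_cast h
  · simp [notMem_support_iff.1 hi]

lemma aeval_add_eq_sum_Icc {d : ℕ} (hd : 3 ≤ d) {P R : ℤ[X]} (hR : R.natDegree = d)
    (hP : P.natDegree ≤ 2) (ξ : ℝ) :
    aeval ξ P + aeval ξ R =
      ((P.coeff 0 + R.coeff 0 : ℤ) : ℝ) + ((P.coeff 1 + R.coeff 1 : ℤ) : ℝ) * ξ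
      + ((P.coeff 2 + R.coeff 2 : ℤ) : ℝ) * ξ ^ 2
      + ∑ i ∈ Finset.Icc 3 d, (R.coeff i : ℝ) * ξ ^ i := by
  rw [aeval_eq_sum_range' (n := 3) (by omega), aeval_eq_sum_range' (n := d + 1) (by omega),
    ← Finset.sum_range_add_sum_Ico _ (show 3 ≤ d + 1 by omega), ← Finset.Ico_add_one_right_eq_Icc]
  simp only [Finset.sum_range_succ, Finset.sum_range_zero, zsmul_eq_mul]
  push_cast
  ring

lemma MarkoffApprox.lower_bound {ξ : ℝ} {a b c : ℕ → ℤ} {X : ℕ → ℝ}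
    (h : MarkoffApprox ξ a b c X) {d : ℕ} (hd : d ∈ ({3, 4, 5} : Set ℕ)) :
    ∃ K, 0 < K ∧ ∀ s₀ s₁ s₂ : ℤ, ∀ r : ℕ → ℤ, ∀ p H : ℝ, 0 ≤ p → 1 ≤ H →
      |(s₁ : ℝ)| ≤ p + H → |(s₂ : ℝ)| ≤ p + H → (∀ i, |(r i : ℝ)| ≤ H) → r d ≠ 0 →
      1 ≤ K * ((1 + p) ^ gold * H ^ (if d = 3 then gold ^ 4 else gold ^ (d + 7))) *
        |s₀ + s₁ * ξ + s₂ * ξ ^ 2 + ∑ i ∈ Finset.Icc 3 d, r i * ξ ^ i| := by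
  have g1 := lt_gold
  have g2 := gold_sq
  have g6 := gold_pow_six
  have g11 : gold ^ 11 = 89 * gold + 55 := by
    linear_combination gold ^ 5 * g6 + 8 * g6 + 5 * gold_pow_five
  have g12 : gold ^ 12 = 144 * gold + 89 := by linear_combination gold * g11 + 89 * g2
  rcases hd with rfl | rfl | rfl
  · obtain ⟨K, hK, hmain⟩ := h.lower_bound_three
    refine ⟨K, hK, fun s₀ s₁ s₂ r p H hp hH h1 h2 hr hr0 => ?_⟩
    simpa using hmain s₀ s₁ s₂ (r 3) p H hp hH h1 h2 (hr 3) hr0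
  · refine h.lower_bound_six (by simp) le_rfl ?_ ?_ ?_ <;> norm_num [g6, g11, g12] <;> nlinarith
  · refine h.lower_bound_six (μ := gold) (by simp) (by linarith) ?_ ?_ ?_ <;>
       norm_num [g6, g11, g12] <;> nlinarith

theorem stmt0 (ξ : ℝ) (x : ℕ → Matrix (Fin 2) (Fin 2) ℤ) (hx : MarkoffSeq ξ x) :
    ∀ d : ℕ, d ∈ ({3, 4, 5} : Set ℕ) →
    ∃ c : ℝ, 0 < c ∧ ∀ P R : Polynomial ℤ, R.natDegree = d → P.natDegree ≤ 2 →
      |Polynomial.aeval ξ P + Polynomial.aeval ξ R| ≥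
        c * (1 + (polyNorm P : ℝ)) ^ (-gold) *
          (polyNorm R : ℝ) ^ (-(if d = 3 then gold ^ 4 else gold ^ (d + 7))) := by
  intro d hd
  obtain ⟨a, b, c, X, h⟩ := hx.exists_markoffApprox
  obtain ⟨K, hK, hmain⟩ := h.lower_bound hd
  have hd3 : 3 ≤ d := by rcases hd with rfl | rfl | rfl <;> norm_num
  refine ⟨K⁻¹, by positivity, fun P R hR hP => ?_⟩
  have hRd : R.coeff d ≠ 0 := by
    rw [← hR]
    exact leadingCoeff_ne_zero.2 fun h0 => by simp [h0] at hR; omega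
  have hp : (0 : ℝ) ≤ polyNorm P := Nat.cast_nonneg _
  have hH : (1 : ℝ) ≤ polyNorm R := by
    refine le_trans ?_ (abs_coeff_le_polyNorm R d)
    exact_mod_cast Int.one_le_abs hRd
  have hs : ∀ i, |((P.coeff i + R.coeff i : ℤ) : ℝ)| ≤ polyNorm P + polyNorm R := by
    intro i
    push_cast
    exact (abs_add_le _ _).trans
      (add_le_add (abs_coeff_le_polyNorm P i) (abs_coeff_le_polyNorm R i))
  have key := hmain (P.coeff 0 + R.coeff 0) (P.coeff 1 + R.coeff 1) (P.coeff 2 + R.coeff 2)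
    R.coeff (polyNorm P) (polyNorm R) hp hH (hs 1) (hs 2) (abs_coeff_le_polyNorm R) hRd
  rw [← aeval_add_eq_sum_Icc hd3 hR hP ξ] at key
  rw [ge_iff_le, Real.rpow_neg (by linarith), Real.rpow_neg (by linarith), ← mul_inv, ← mul_inv,
    mul_assoc, inv_le_iff_one_le_mul₀' (by positivity)]
  exact key
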